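/- arXiv:0704.2899 — 2 statements merged into one kernel-verified Lean document; each statement's English description precedes it below -/
import Mathlib

section
/- For every integer n ≥ 1 and every injective group endomorphism φ of the free group Fₙ, the ascending HNN extension HNN_φ(Fₙ) = ⟨x₁, …, xₙ, t ∣ t xᵢ t⁻¹ = φ(xᵢ) for i = 1, …, n⟩ is coherent: every finitely generated subgroup of HNN_φ(Fₙ) is finitely presented. -/
/-! The proof follows the argument of Feighn and Handel, with folding of graphs replaced by a
minimality argument for pairs of finitely generated subgroups of a free group.

**Reduction.** Let `G` be the ascending HNN extension of the free group `F`, with stable letter `t`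
and degree homomorphism `G → ℤ`. The kernel of the degree is the increasing union of the conjugates
`t ^ (-m) * F * t ^ m`, so a finitely generated subgroup `H` either lies in one of these conjugates
and is free, or is generated by an element `h` of positive degree and a finitely generated subgroup
`A₀` of some conjugate `F'` such that `h` conjugates `F'` into itself by an injective endomorphism
`ψ` (`isFinitelyPresented_of_ascending`). It remains to present such a group `⟨A₀, h⟩`
(`finitelyPresented_of_stable_letter`).

**The presentation.** Let `U = H ∩ F'`. Consider pairs `A ≤ A₁` of finitely generated subgroups with
`A₀ ≤ A`, `A₁ ≤ U` and `ψ(A) ≤ A₁`, and choose one of minimal relative rank `d`. A pair can be found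
with `A₁ = A ∗ ⟨y₁, …, y_d⟩`, and then `H` is `⟨A₁, t ∣ t a t⁻¹ = ψ(a), a ∈ A⟩`, which is finitely
presented because `A` is finitely generated and `A₁` is free of finite rank. Indeed the subgroups
`A₁ ∗ ⟨ψ(y₁), …⟩ ∗ … ∗ ⟨ψ^k(y₁), …⟩` again form pairs with their successors, each one generated by
`d` elements over the previous one, and minimality makes these generators free. So the free product
structure visible in the presented group persists in `H` (`injective_of_good_pair`).

**Minimality.** The key statement `relGen_injective` is that for any pair a relative generating
system of the minimal size `d` is free. If `A` is a free factor of `A₁` this is the Hopf property of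
free groups. In general `A` is replaced by the hull `A'` of `A₁`, generated by the elements of `A₁`
in a fixed ball; it contains `A` and is a free factor of `A₁` by a Schreier basis computation
(`hull_free_factor`). The pair `A' ≤ A₁ ⊔ ψ(A')` is generated by as many elements as before, up to
free generators added on both sides (`RelGen`), and freeness for it implies freeness for `A ≤ A₁`,
as `ψ` induces injective maps of free products (`coprod_map_injective`). Since the ball is finite,
the process stops. -/

/-- The relators `t xᵢ t⁻¹ φ(xᵢ)⁻¹` (for `i = 1, …, n`) of the ascending HNN
extension `HNN_φ(Fₙ) = ⟨x₁, …, xₙ, t ∣ t xᵢ t⁻¹ = φ(xᵢ)⟩`, written in the free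
group on the generators `x₁, …, xₙ` (the `Sum.inl` part) and `t` (the `Sum.inr`
part). -/
def HNNRels (n : ℕ) (φ : FreeGroup (Fin n) →* FreeGroup (Fin n)) :
    Set (FreeGroup (Fin n ⊕ Unit)) :=
  {r | ∃ i : Fin n,
    r = FreeGroup.of (Sum.inr ()) * FreeGroup.of (Sum.inl i) *
        (FreeGroup.of (Sum.inr ()))⁻¹ *
        (FreeGroup.map Sum.inl (φ (FreeGroup.of i)))⁻¹}

/-- A group is finitely presented if it is isomorphic to the quotient of a
finitely generated free group by the normal closure of finitely many elements. -/
def FinitelyPresentedGroup (H : Type*) [Group H] : Prop :=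
  ∃ (α : Type) (_ : Finite α) (rels : Set (FreeGroup α)),
    rels.Finite ∧ Nonempty (H ≃* PresentedGroup rels)

/-! ### Balls and hulls in free groups -/

/-- The elements of `FreeGroup α` represented by a word of length at most `N`. -/
def wordBall (α : Type) (N : ℕ) : Set (FreeGroup α) :=
  {g | ∃ L : List (α × Bool), L.length ≤ N ∧ FreeGroup.mk L = g}

theorem wordBall_finite (α : Type) [Finite α] (N : ℕ) : (wordBall α N).Finite := by
  have h : {L : List (α × Bool) | L.length ≤ N}.Finite := List.finite_length_le _ N
  refine (h.image FreeGroup.mk).subset ?_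
  rintro g ⟨L, hL, rfl⟩
  exact ⟨L, hL, rfl⟩

theorem exists_mem_wordBall {α : Type} (g : FreeGroup α) : ∃ N, g ∈ wordBall α N := by
  classical
  exact ⟨g.toWord.length, g.toWord, le_rfl, FreeGroup.mk_toWord⟩

theorem wordBall_mono {α : Type} {M N : ℕ} (h : M ≤ N) : wordBall α M ⊆ wordBall α N := by
  rintro g ⟨L, hL, rfl⟩
  exact ⟨L, hL.trans h, rfl⟩

theorem wordBall_mul {α : Type} {M N : ℕ} {g h : FreeGroup α} (hg : g ∈ wordBall α M)
    (hh : h ∈ wordBall α N) : g * h ∈ wordBall α (M + N) := by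
  obtain ⟨L, hL, rfl⟩ := hg
  obtain ⟨K, hK, rfl⟩ := hh
  exact ⟨L ++ K, by simp; omega, by simp⟩

theorem wordBall_inv {α : Type} {N : ℕ} {g : FreeGroup α} (hg : g ∈ wordBall α N) :
    g⁻¹ ∈ wordBall α N := by
  obtain ⟨L, hL, rfl⟩ := hg
  exact ⟨FreeGroup.invRev L, by simpa using hL, by simp [FreeGroup.inv_mk]⟩

/-- The `N`-hull of a subgroup `C` of a free group: the subgroup generated by the elements of `C`
of word length at most `2 * N + 1`. -/
def hull {α : Type} (C : Subgroup (FreeGroup α)) (N : ℕ) : Subgroup (FreeGroup α) :=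
  Subgroup.closure ((C : Set (FreeGroup α)) ∩ wordBall α (2 * N + 1))

theorem hull_le {α : Type} (C : Subgroup (FreeGroup α)) (N : ℕ) : hull C N ≤ C :=
  (Subgroup.closure_le _).2 fun _ h => h.1

/-- A function on the generators of a free group acting on `V` extends to a cocycle. This is how a
left inverse of the map from the free product is defined in `hull_free_factor`. -/
theorem exists_cocycle {α V P : Type} [Group P] [MulAction (FreeGroup α) V] (c : α → V → P) :
    ∃ k : FreeGroup α → V → P, (∀ g h v, k (g * h) v = k g (h • v) * k h v) ∧
      ∀ x v, k (FreeGroup.of x) v = c x v := by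
  let gen (x : α) : Equiv.Perm (V × P) :=
    { toFun := fun w => (FreeGroup.of x • w.1, c x w.1 * w.2)
      invFun := fun w => ((FreeGroup.of x)⁻¹ • w.1, (c x ((FreeGroup.of x)⁻¹ • w.1))⁻¹ * w.2)
      left_inv := fun w => by simp
      right_inv := fun w => by simp }
  let Φ : FreeGroup α →* Equiv.Perm (V × P) := FreeGroup.lift gen
  have hΦ : ∀ x w, Φ (FreeGroup.of x) w = (FreeGroup.of x • w.1, c x w.1 * w.2) := by
    intro x w; simp [Φ, gen]
  have key : ∀ g v q, Φ g (v, q) = (g • v, (Φ g (v, 1)).2 * q) := by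
    intro g
    induction g using FreeGroup.induction_on with
    | C1 => intro v q; simp
    | of x => intro v q; simp [hΦ]
    | inv_of x _ =>
      intro v q
      rw [map_inv]
      simp [Φ, gen, Equiv.Perm.inv_def, Equiv.symm]
    | mul g h hg hh =>
      intro v q
      rw [map_mul, Equiv.Perm.mul_apply, hh, hg, Equiv.Perm.mul_apply, hh v 1,
        hg _ ((Φ h (v, 1)).2 * 1)]
      simp [mul_smul, mul_assoc]
  refine ⟨fun g v => (Φ g (v, 1)).2, ?_, ?_⟩
  · intro g h v
    simp only
    rw [map_mul, Equiv.Perm.mul_apply, key h v 1, key g]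
  · intro x v
    simp only
    rw [hΦ]; simp

/-- A geodesic spanning tree of a transitive action of a free group: `p v` is the label of the
tree path from `b` to `v`, and `d v` is the distance from `b` to `v`. -/
theorem exists_geodesic_tree {α V : Type} [MulAction (FreeGroup α) V] (b : V)
    (hb : ∀ v : V, ∃ g : FreeGroup α, g • b = v) :
    ∃ (p : V → FreeGroup α) (d : V → ℕ), p b = 1 ∧ (∀ v, p v • b = v) ∧
      (∀ v, p v ∈ wordBall α (d v)) ∧
      (∀ (L : List (α × Bool)), d (FreeGroup.mk L • b) ≤ L.length) ∧
      (∀ v, v ≠ b → ∃ u l, d u < d v ∧ p v = FreeGroup.mk [l] * p u) := by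
  classical
  have hL : ∀ v : V, ∃ n : ℕ, ∃ L : List (α × Bool), L.length = n ∧ FreeGroup.mk L • b = v := by
    intro v
    obtain ⟨g, rfl⟩ := hb v
    exact ⟨_, g.toWord, rfl, by rw [FreeGroup.mk_toWord]⟩
  let d : V → ℕ := fun v => Nat.find (hL v)
  have hd1 : ∀ L : List (α × Bool), d (FreeGroup.mk L • b) ≤ L.length := fun L =>
    Nat.find_min' (hL _) ⟨L, rfl, rfl⟩
  have hd0 : ∀ v, d v = 0 → v = b := by
    intro v hv
    obtain ⟨L, h1, h2⟩ := Nat.find_spec (hL v)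
    have : L = [] := List.length_eq_zero_iff.1 (h1.trans hv)
    subst this
    rw [← h2, ← FreeGroup.one_eq_mk, one_smul]
  have hdb : d b = 0 := by
    have := hd1 []
    rw [← FreeGroup.one_eq_mk, one_smul] at this
    simpa using this
  have hpar : ∀ v, v ≠ b → ∃ (u : V) (K : List (α × Bool)),
      d u + 1 = d v ∧ FreeGroup.mk K • u = v ∧ K.length = 1 := by
    intro v hv
    obtain ⟨L, h1, h2⟩ := Nat.find_spec (hL v)
    change L.length = d v at h1
    cases L with
    | nil =>
      exact absurd (hd0 v h1.symm) hv
    | cons l L =>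
      refine ⟨FreeGroup.mk L • b, [l], ?_, ?_, rfl⟩
      · have h3 := hd1 L
        obtain ⟨K, h4, h5⟩ := Nat.find_spec (hL (FreeGroup.mk L • b))
        change K.length = d (FreeGroup.mk L • b) at h4
        have h6 : d v ≤ (l :: K).length := by
          rw [← h2]
          have : FreeGroup.mk (l :: L) • b = FreeGroup.mk (l :: K) • b := by
            rw [← List.singleton_append, ← FreeGroup.mul_mk, mul_smul, ← h5, ← mul_smul,
              FreeGroup.mul_mk, List.singleton_append]
          rw [this]
          exact hd1 _
        simp only [List.length_cons] at h1 h6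
        omega
      · rw [← mul_smul, FreeGroup.mul_mk, List.singleton_append, h2]
  choose! par edge hp1 hp2 hp3 using hpar
  let q : ℕ → V → FreeGroup α := fun n =>
    Nat.rec (fun _ => 1) (fun _ f v => FreeGroup.mk (edge v) * f (par v)) n
  have hq : ∀ v, v ≠ b → q (d v) v = FreeGroup.mk (edge v) * q (d (par v)) (par v) := by
    intro v hv
    rw [← hp1 v hv]
  have hind : ∀ (Q : V → Prop), Q b → (∀ v, v ≠ b → Q (par v) → Q v) → ∀ v, Q v := by
    intro Q h0 h1 v
    induction hn : d v generalizing v with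
    | zero => exact hd0 v hn ▸ h0
    | succ n ih =>
      by_cases hv : v = b
      · exact hv ▸ h0
      · exact h1 v hv (ih _ (by have := hp1 v hv; omega))
  refine ⟨fun v => q (d v) v, d, ?_, ?_, ?_, hd1, ?_⟩
  · simp only [hdb]; rfl
  · refine hind _ ?_ ?_
    · simp only [hdb]; exact one_smul _ b
    · intro v hv ih
      simp only
      rw [hq v hv, mul_smul, ih, hp2 v hv]
  · refine hind _ ?_ ?_
    · simp only [hdb]; exact ⟨[], by simp, rfl⟩
    · intro v hv ih
      simp only
      rw [hq v hv, ← hp1 v hv, add_comm]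
      exact wordBall_mul ⟨edge v, (hp3 v hv).le, rfl⟩ ih
  · intro v hv
    obtain ⟨l, hl⟩ := List.length_eq_one_iff.1 (hp3 v hv)
    exact ⟨par v, l, by have := hp1 v hv; omega, hl ▸ hq v hv⟩

open Monoid Monoid.Coprod in
/-- The hull of `C` is a free factor of `C` with free complement: a basis of the complement is
given by the nontrivial Schreier generators of `C`, for a geodesic tree in the Schreier graph, that
correspond to edges leaving the ball of radius `N`. -/
theorem hull_free_factor {α : Type} (C : Subgroup (FreeGroup α)) (N : ℕ) :
    ∃ (β : Type) (e : Coprod (hull C N) (FreeGroup β) ≃* C),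
      ∀ a, ((e (inl a) : C) : FreeGroup α) = a := by
  classical
  let V := FreeGroup α ⧸ C
  let b : V := ((1 : FreeGroup α) : V)
  have hbV : ∀ g : FreeGroup α, g • b = ((g : FreeGroup α) : V) := fun g => by
    change ((g * 1 : FreeGroup α) : V) = _
    rw [mul_one]
  have hbC : ∀ g : FreeGroup α, g • b = b ↔ g ∈ C := fun g => by
    rw [hbV, eq_comm, QuotientGroup.eq]; simp
  obtain ⟨p, d, hpb, hpv, hpd, hdL, htree⟩ := exists_geodesic_tree b
    (fun v => by
      obtain ⟨g, rfl⟩ := QuotientGroup.mk_surjective v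
      exact ⟨g, hbV g⟩)
  -- Schreier elements attached to arbitrary group elements
  let s : FreeGroup α → V → FreeGroup α := fun g v => (p (g • v))⁻¹ * g * p v
  have hsC : ∀ g v, s g v ∈ C := fun g v => by
    rw [← hbC]
    simp only [s, mul_smul, hpv]
    rw [inv_smul_eq_iff, hpv]
  have hsmul : ∀ g h v, s (g * h) v = s g (h • v) * s h v := fun g h v => by
    simp only [s, mul_smul]; group
  have hsone : ∀ v, s 1 v = 1 := fun v => by simp [s]
  have hsinv : ∀ g v, s g⁻¹ v = (s g (g⁻¹ • v))⁻¹ := fun g v => by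
    simp only [s, smul_inv_smul]; group
  have hsb : ∀ g ∈ C, s g b = g := fun g hg => by
    simp [s, (hbC g).2 hg, hpb]
  have hstree : ∀ v, s (p v) b = 1 := fun v => by
    simp [s, hpv, hpb]
  have hshull : ∀ x v, d v ≤ N → d (FreeGroup.of x • v) ≤ N → s (FreeGroup.of x) v ∈ hull C N := by
    intro x v h1 h2
    refine Subgroup.subset_closure ⟨hsC _ _, ?_⟩
    refine wordBall_mono ?_ (wordBall_mul (wordBall_mul (wordBall_inv (hpd _))
      (⟨[(x, true)], le_rfl, rfl⟩ : FreeGroup.of x ∈ wordBall α 1)) (hpd _))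
    omega
  let β := {e : α × V // ¬ (d e.2 ≤ N ∧ d (FreeGroup.of e.1 • e.2) ≤ N) ∧
    s (FreeGroup.of e.1) e.2 ≠ 1}
  let y : β → C := fun e => ⟨s (FreeGroup.of e.1.1) e.1.2, hsC _ _⟩
  let Λ : Coprod (hull C N) (FreeGroup β) →* C :=
    lift (Subgroup.inclusion (hull_le C N)) (FreeGroup.lift y)
  have hΛl : ∀ a, Λ (inl a) = Subgroup.inclusion (hull_le C N) a := fun a => by simp [Λ]
  have hΛr : ∀ e, Λ (inr (FreeGroup.of e)) = y e := fun e => by simp [Λ]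
  have hsurj : Function.Surjective Λ := by
    have h1 : ∀ g : FreeGroup α, ∀ v, (⟨s g v, hsC g v⟩ : C) ∈ Λ.range := by
      intro g
      induction g using FreeGroup.induction_on with
      | C1 => intro v; convert Λ.range.one_mem; exact hsone v
      | of x =>
        intro v
        by_cases h1 : s (FreeGroup.of x) v = 1
        · convert Λ.range.one_mem; exact h1
        by_cases h2 : d v ≤ N ∧ d (FreeGroup.of x • v) ≤ N
        · exact ⟨inl ⟨_, hshull x v h2.1 h2.2⟩, by rw [hΛl]; rfl⟩
        · exact ⟨inr (FreeGroup.of ⟨(x, v), h2, h1⟩), by rw [hΛr]⟩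
      | inv_of x ih =>
        intro v
        convert Λ.range.inv_mem (ih ((FreeGroup.of x)⁻¹ • v))
        exact hsinv _ _
      | mul g h hg hh =>
        intro v
        convert Λ.range.mul_mem (hg (h • v)) (hh v)
        exact hsmul _ _ _
    intro c
    obtain ⟨z, hz⟩ := h1 c b
    exact ⟨z, by rw [hz]; exact Subtype.ext (hsb c c.2)⟩
  -- the left inverse
  let P := Coprod (hull C N) (FreeGroup β)
  let c : α → V → P := fun x v =>
    if h1 : s (FreeGroup.of x) v = 1 then 1
    else if h2 : d v ≤ N ∧ d (FreeGroup.of x • v) ≤ N then inl ⟨_, hshull x v h2.1 h2.2⟩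
    else inr (FreeGroup.of ⟨(x, v), h2, h1⟩)
  have hc1 : ∀ x v, s (FreeGroup.of x) v = 1 → c x v = 1 := fun x v h => by simp [c, h]
  have hcN : ∀ x v (h1 : d v ≤ N) (h2 : d (FreeGroup.of x • v) ≤ N),
      c x v = inl ⟨_, hshull x v h1 h2⟩ := fun x v h1 h2 => by
    by_cases h : s (FreeGroup.of x) v = 1
    · rw [hc1 x v h, ← map_one inl]; congr 1; exact Subtype.ext h.symm
    · simp [c, h, h1, h2]
  have hcβ : ∀ e : β, c e.1.1 e.1.2 = inr (FreeGroup.of e) := fun e => by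
    simp only [c, dif_neg e.2.1, dif_neg e.2.2]; rfl
  obtain ⟨k, hkmul, hkof⟩ := exists_cocycle (α := α) c
  have hkone : ∀ v, k 1 v = 1 := fun v => by
    have := hkmul 1 1 v
    simpa using this
  have hkinv : ∀ g v, k g⁻¹ v = (k g (g⁻¹ • v))⁻¹ := fun g v => by
    have := hkmul g g⁻¹ v
    rw [mul_inv_cancel, hkone] at this
    exact eq_inv_of_mul_eq_one_right this.symm
  have hletter : ∀ (l : α × Bool), FreeGroup.mk [l] = FreeGroup.of l.1 ∨
      FreeGroup.mk [l] = (FreeGroup.of l.1)⁻¹ := by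
    rintro ⟨x, _ | _⟩
    · right; rfl
    · left; rfl
  have hktree : ∀ v, k (p v) b = 1 := by
    intro v
    induction hn : d v using Nat.strong_induction_on generalizing v with
    | _ n ih =>
    by_cases hv : v = b
    · rw [hv, hpb, hkone]
    obtain ⟨u, l, hlt, hpu⟩ := htree v hv
    have hlu : FreeGroup.mk [l] • u = v := by
      rw [← hpv u, ← mul_smul, ← hpu, hpv]
    have hs1 : s (FreeGroup.mk [l]) u = 1 := by
      simp only [s, hlu, mul_assoc, ← hpu, inv_mul_cancel]
    rw [hpu, hkmul, ih _ (hn ▸ hlt) u rfl, mul_one, hpv]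
    rcases hletter l with h | h
    · rw [h] at hs1 ⊢
      rw [hkof, hc1 _ _ hs1]
    · rw [h] at hs1 ⊢
      rw [hsinv, inv_eq_one] at hs1
      rw [hkinv, hkof, hc1 _ _ hs1, inv_one]
  -- on edges inside the ball, the cocycle is the Schreier cocycle
  have hkl : ∀ (l : α × Bool) v, d v ≤ N → d (FreeGroup.mk [l] • v) ≤ N →
      ∃ hm : s (FreeGroup.mk [l]) v ∈ hull C N, k (FreeGroup.mk [l]) v = inl ⟨_, hm⟩ := by
    intro l v h1 h2
    rcases hletter l with h | h
    · rw [h] at h2 ⊢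
      exact ⟨hshull _ _ h1 h2, by rw [hkof, hcN _ _ h1 h2]⟩
    · rw [h] at h2 ⊢
      have h3 : d (FreeGroup.of l.1 • (FreeGroup.of l.1)⁻¹ • v) ≤ N := by rwa [smul_inv_smul]
      have h4 := hshull _ _ h2 h3
      refine ⟨by rw [hsinv]; exact inv_mem h4, ?_⟩
      rw [hkinv, hkof, hcN _ _ h2 h3, ← map_inv]
      congr 1
      exact Subtype.ext (hsinv _ _).symm
  -- the relation between the two cocycles, as a relation closed under composition
  let R : FreeGroup α → V → Prop := fun g v => ∃ hm : s g v ∈ hull C N, k g v = inl ⟨_, hm⟩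
  have hRone : ∀ v, R 1 v := fun v => by
    refine ⟨by rw [hsone]; exact one_mem _, ?_⟩
    rw [hkone, ← map_one inl]; congr 1; exact Subtype.ext (hsone v).symm
  have hRmul : ∀ g h v, R g (h • v) → R h v → R (g * h) v := by
    rintro g h v ⟨h1, h2⟩ ⟨h3, h4⟩
    refine ⟨by rw [hsmul]; exact mul_mem h1 h3, ?_⟩
    rw [hkmul, h2, h4, ← map_mul]
    congr 1; exact Subtype.ext (hsmul _ _ _).symm
  have hRinv : ∀ g v, R g (g⁻¹ • v) → R g⁻¹ v := by
    rintro g v ⟨h1, h2⟩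
    refine ⟨by rw [hsinv]; exact inv_mem h1, ?_⟩
    rw [hkinv, h2, ← map_inv]
    congr 1; exact Subtype.ext (hsinv _ _).symm
  have hRshort : ∀ L : List (α × Bool), L.length ≤ N → R (FreeGroup.mk L) b := by
    intro L
    induction L with
    | nil => intro _; exact hRone b
    | cons l L ih =>
      intro hL
      rw [← List.singleton_append, ← FreeGroup.mul_mk]
      simp only [List.length_cons] at hL
      refine hRmul _ _ _ (hkl l _ ((hdL L).trans (by omega)) ?_) (ih (by omega))
      rw [← mul_smul, FreeGroup.mul_mk]
      exact (hdL _).trans (by simpa using hL)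
  have hRball : ∀ z ∈ C, z ∈ wordBall α (2 * N + 1) → R z b := by
    rintro z hz ⟨L, hL, rfl⟩
    have hsplit : L = L.take N ++ ((L.drop N).take 1 ++ (L.drop N).drop 1) := by simp
    set L₁ := L.take N
    set L₂ := (L.drop N).take 1 with hL2
    set L₃ := (L.drop N).drop 1 with hL3
    have h1 : L₁.length ≤ N := by simp [L₁]
    have h3 : L₃.length ≤ N := by simp [L₃]; omega
    rw [hsplit, ← FreeGroup.mul_mk, ← FreeGroup.mul_mk] at hz ⊢
    have hb := (hbC _).2 hz
    rw [mul_smul, ← eq_inv_smul_iff] at hb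
    have h1' : (FreeGroup.invRev L₁).length ≤ N := by simpa using h1
    have hR2 : R (FreeGroup.mk L₂) (FreeGroup.mk L₃ • b) := by
      cases hd : L.drop N with
      | nil => simp only [L₂, hd]; exact hRone _
      | cons l K =>
        have : L₂ = [l] := by simp [L₂, hd]
        rw [this]
        refine hkl _ _ ((hdL _).trans h3) ?_
        rw [← this, ← mul_smul, hb, FreeGroup.inv_mk]
        exact (hdL _).trans h1'
    refine hRmul _ _ _ ?_ (hRmul _ _ _ hR2 (hRshort _ h3))
    rw [hb]
    have := hRshort _ h1'
    rw [← FreeGroup.inv_mk] at this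
    have h4 := hRinv _ ((FreeGroup.mk L₁)⁻¹ • b) (by rwa [inv_inv, smul_inv_smul])
    rwa [inv_inv] at h4
  let κ : C →* P :=
    { toFun := fun g => k g b
      map_one' := hkone b
      map_mul' := fun g h => by
        rw [Subgroup.coe_mul, hkmul, (hbC h).2 h.2] }
  have hκhull : ∀ a : hull C N, κ (Subgroup.inclusion (hull_le C N) a) = inl a := by
    rintro ⟨a, ha⟩
    change k a b = inl ⟨a, ha⟩
    have hR : R a b := by
      have hC := hull_le C N
      have : ∀ z ∈ hull C N, z ∈ C ∧ R z b := by
        intro z hz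
        induction hz using Subgroup.closure_induction with
        | mem z hz => exact ⟨hz.1, hRball z hz.1 hz.2⟩
        | one => exact ⟨one_mem _, hRone b⟩
        | mul g h _ _ hg hh =>
          exact ⟨mul_mem hg.1 hh.1, hRmul _ _ _ (by rw [(hbC h).2 hh.1]; exact hg.2) hh.2⟩
        | inv g _ hg =>
          exact ⟨inv_mem hg.1, hRinv _ _ (by rw [(hbC _).2 (inv_mem hg.1)]; exact hg.2)⟩
      exact (this a ha).2
    obtain ⟨hm, h⟩ := hR
    rw [h]
    congr 1
    exact Subtype.ext (hsb a (hull_le C N ha))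
  have hκy : ∀ e : β, κ (y e) = inr (FreeGroup.of e) := by
    intro e
    change k ((p (FreeGroup.of e.1.1 • e.1.2))⁻¹ * FreeGroup.of e.1.1 * p e.1.2) b = _
    rw [hkmul, hktree, hpv, mul_one, hkmul, hkof, hcβ, hkinv, inv_smul_eq_iff.2 (hpv _).symm,
      hktree, inv_one, one_mul]
  have hleft : κ.comp Λ = MonoidHom.id P := by
    refine Coprod.hom_ext ?_ ?_
    · ext a
      simp only [MonoidHom.comp_apply, hΛl, hκhull]
      rfl
    · refine FreeGroup.ext_hom _ _ fun e => ?_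
      simp only [MonoidHom.comp_apply, hΛr, hκy]
      rfl
  have hinj : Function.Injective Λ := by
    intro u v huv
    have := congrArg κ huv
    rwa [← MonoidHom.comp_apply, ← MonoidHom.comp_apply, hleft] at this
  refine ⟨β, MulEquiv.ofBijective Λ ⟨hinj, hsurj⟩, fun a => ?_⟩
  exact congrArg Subtype.val (hΛl a)

/-! ### Injectivity of maps of free products -/

open Monoid Monoid.Coprod in
/-- An injective homomorphism `f : A → B` induces an injective homomorphism `A ∗ C → B ∗ C`. The
left regular action of `A ∗ C` embeds in an action of `B ∗ C`: as a left `A`-set, `A ∗ C` is a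
disjoint union of copies of `A`, which can be enlarged to copies of `B`. -/
theorem coprod_map_injective {A B C : Type} [Group A] [Group B] [Group C] (f : A →* B)
    (hf : Function.Injective f) :
    Function.Injective (Coprod.map f (MonoidHom.id C)) := by
  classical
  let W := Coprod A C
  let K : Subgroup W := (inl : A →* W).range
  let r : W → W := fun w => (Quotient.out ((w⁻¹ : W) : W ⧸ K))⁻¹
  have hr : ∀ w, ∃ a : A, w = inl a * r w := by
    intro w
    have h : ((w⁻¹ : W) : W ⧸ K) = ((r w)⁻¹ : W) := by
      simp only [r]; rw [inv_inv]; exact (Quotient.out_eq _).symm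
    rw [QuotientGroup.eq] at h
    obtain ⟨a, ha⟩ := h
    exact ⟨a, by rw [ha, inv_inv, inv_mul_cancel_right]⟩
  have hr2 : ∀ a w, r (inl a * w) = r w := by
    intro a w
    have : (((inl a * w)⁻¹ : W) : W ⧸ K) = (w⁻¹ : W) := by
      rw [QuotientGroup.eq]
      exact ⟨a, by rw [inv_inv, mul_inv_cancel_right]⟩
    simp only [r, this]
  choose k hk using hr
  have hk2 : ∀ a w, k (inl a * w) = a * k w := by
    intro a w
    apply inl_injective (N := C)
    have h1 := hk (inl a * w)
    rw [hr2] at h1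
    conv_lhs at h1 => rw [hk w]
    rw [← mul_assoc] at h1
    rw [map_mul]
    exact (mul_right_cancel h1).symm
  let j : W ↪ B × W := ⟨fun w => (f (k w), r w), by
    intro u v h
    simp only [Prod.mk.injEq] at h
    rw [hk u, hk v, hf h.1, h.2]⟩
  let ρC : C →* Equiv.Perm (B × W) :=
    (Equiv.Perm.viaEmbeddingHom j).comp ((MulAction.toPermHom W W).comp inr)
  let ρB : B →* Equiv.Perm (B × W) :=
    { toFun := fun b => ⟨fun w => (b * w.1, w.2), fun w => (b⁻¹ * w.1, w.2),
        fun w => by simp, fun w => by simp⟩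
      map_one' := by ext <;> simp
      map_mul' := fun b c => by ext <;> simp [mul_assoc] }
  have hC : ∀ (c : C) (w : W), ρC c (j w) = j (inr c * w) := by
    intro c w
    change Equiv.Perm.viaEmbedding _ j (j w) = _
    rw [Equiv.Perm.viaEmbedding_apply]
    rfl
  have hB : ∀ (a : A) (w : W), ρB (f a) (j w) = j (inl a * w) := by
    intro a w
    change (f a * f (k w), r w) = (f (k (inl a * w)), r (inl a * w))
    rw [hk2, hr2, map_mul]
  have key : ∀ x w : W, lift ρB ρC (Coprod.map f (MonoidHom.id C) x) (j w) = j (x * w) := by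
    intro x
    induction x using Coprod.induction_on with
    | inl a => intro w; rw [map_apply_inl, lift_apply_inl, hB]
    | inr c => intro w; rw [map_apply_inr, lift_apply_inr]; exact hC c w
    | mul x y hx hy =>
      intro w
      rw [map_mul, map_mul, Equiv.Perm.mul_apply, hy, hx, mul_assoc]
  rw [injective_iff_map_eq_one]
  intro x hx
  have h1 := key x 1
  rw [hx, map_one, Equiv.Perm.one_apply, mul_one] at h1
  exact (j.injective h1).symm

/-! ### Ranks, residual finiteness and the Hopf property -/

open Monoid Monoid.Coprod in
/-- The free product of two free groups is free on the disjoint union of the bases. -/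
noncomputable def freeCoprod (γ δ : Type) :
    Coprod (FreeGroup γ) (FreeGroup δ) ≃* FreeGroup (γ ⊕ δ) :=
  MonoidHom.toMulEquiv
    (lift (FreeGroup.map Sum.inl) (FreeGroup.map Sum.inr))
    (FreeGroup.lift (Sum.elim (fun c => inl (FreeGroup.of c)) (fun c => inr (FreeGroup.of c))))
    (by
      refine Coprod.hom_ext ?_ ?_ <;> refine FreeGroup.ext_hom _ _ fun x => ?_ <;> simp)
    (by
      refine FreeGroup.ext_hom _ _ fun x => ?_
      rcases x with x | x <;> simp)

/-- Homomorphisms to `ℤ/2` bound the rank of a free quotient of a free group. -/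
theorem free_rank_le {γ δ : Type} [Finite γ] (f : FreeGroup γ →* FreeGroup δ)
    (hf : Function.Surjective f) : Finite δ ∧ Nat.card δ ≤ Nat.card γ := by
  classical
  let Z := ℤˣ
  have hcZ : Nat.card Z = 2 := by simp [Z]
  let T : (δ → Z) → (γ → Z) := fun u => FreeGroup.lift.symm ((FreeGroup.lift u).comp f)
  have hT : Function.Injective T := by
    intro u v huv
    have h1 := FreeGroup.lift.symm.injective huv
    rw [MonoidHom.cancel_right hf] at h1
    exact FreeGroup.lift.injective h1
  have : Finite (δ → Z) := Finite.of_injective T hT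
  obtain ⟨z, hz⟩ : ∃ z : Z, z ≠ 1 := ⟨-1, by decide⟩
  have : Finite δ := Finite.of_injective (fun d : δ => (Pi.mulSingle d z : δ → Z)) (by
    intro d e hde
    by_contra hne
    have := congrFun hde d
    simp only [Pi.mulSingle_eq_same, Pi.mulSingle_eq_of_ne hne] at this
    exact hz this)
  refine ⟨‹_›, ?_⟩
  have h2 := Nat.card_le_card_of_injective T hT
  rw [Nat.card_fun, Nat.card_fun, hcZ] at h2
  exact (Nat.pow_le_pow_iff_right (by norm_num)).1 h2

theorem finite_of_fg_freeGroup {β : Type} (h : Group.FG (FreeGroup β)) : Finite β := by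
  obtain ⟨n, _, f, hf⟩ := Group.fg_iff_exists_freeGroup_hom_surjective_finite.1 h
  exact (free_rank_le f hf).1

theorem fg_of_surjective {G H : Type} [Group G] [Group H] (hG : Group.FG G) (f : G →* H)
    (hf : Function.Surjective f) : Group.FG H :=
  Group.fg_of_surjective hf

/-- A finitely generated subgroup of a free group is free of finite rank. -/
theorem exists_finite_basis {α : Type} (A : Subgroup (FreeGroup α)) (hA : A.FG) :
    ∃ ι : Type, Finite ι ∧ Nonempty (A ≃* FreeGroup ι) := by
  have : Group.FG A := (Group.fg_iff_subgroup_fg A).2 hA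
  let e := IsFreeGroup.toFreeGroup A
  exact ⟨_, finite_of_fg_freeGroup (fg_of_surjective inferInstance e.toMonoidHom e.surjective), ⟨e⟩⟩

/-- Free groups are residually finite: the finitely many suffixes of a word carry a permutation
action in which the word moves the trivial element as in the regular action. -/
theorem freeGroup_residually_finite {α : Type} (g : FreeGroup α) (hg : g ≠ 1) :
    ∃ (P : Type) (_ : Group P) (_ : Finite P) (ρ : FreeGroup α →* P), ρ g ≠ 1 := by
  classical
  let L₀ := g.toWord
  let S : Set (FreeGroup α) := {s | ∃ L, L <:+ L₀ ∧ FreeGroup.mk L = s}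
  have hS : S.Finite := by
    refine ((L₀.tails.finite_toSet).image FreeGroup.mk).subset ?_
    rintro _ ⟨L, hL, rfl⟩
    exact ⟨L, by simpa using hL, rfl⟩
  have : Fintype S := hS.fintype
  let σ : α → Equiv.Perm S := fun x =>
    Equiv.extendSubtype (p := fun s : S => FreeGroup.of x * s.1 ∈ S)
      (q := fun s : S => (FreeGroup.of x)⁻¹ * s.1 ∈ S)
      { toFun := fun s => ⟨⟨_, s.2⟩, by simp⟩
        invFun := fun s => ⟨⟨_, s.2⟩, by simp⟩
        left_inv := fun s => by simp
        right_inv := fun s => by simp }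
  have hσ : ∀ (x : α) (s : S) (h : FreeGroup.of x * s.1 ∈ S), σ x s = ⟨_, h⟩ := fun x s h =>
    Equiv.extendSubtype_apply_of_mem _ s h
  have h1 : (1 : FreeGroup α) ∈ S := ⟨[], List.nil_suffix, rfl⟩
  let ρ : FreeGroup α →* Equiv.Perm S := FreeGroup.lift σ
  have key : ∀ L (h : L <:+ L₀), ρ (FreeGroup.mk L) ⟨1, h1⟩ = ⟨FreeGroup.mk L, L, h, rfl⟩ := by
    intro L
    induction L with
    | nil => 
      intro h
      refine Subtype.ext ?_
      change (ρ (FreeGroup.mk []) ⟨1, h1⟩).1 = FreeGroup.mk []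
      rw [← FreeGroup.one_eq_mk, map_one, Equiv.Perm.one_apply]
    | cons l L ih =>
      intro h
      have hL : L <:+ L₀ := (List.suffix_cons l L).trans h
      have hlL : FreeGroup.mk [l] * FreeGroup.mk L = FreeGroup.mk (l :: L) := by
        rw [FreeGroup.mul_mk, List.singleton_append]
      have hmem : FreeGroup.mk (l :: L) ∈ S := ⟨_, h, rfl⟩
      have h2 : ρ (FreeGroup.mk (l :: L)) ⟨1, h1⟩ =
          ρ (FreeGroup.mk [l]) ⟨FreeGroup.mk L, L, hL, rfl⟩ := by
        rw [← hlL, map_mul, Equiv.Perm.mul_apply, ih hL]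
      rw [h2]
      obtain ⟨x, b⟩ := l
      cases b with
      | true =>
        have h3 : FreeGroup.of x * FreeGroup.mk L ∈ S := by
          change FreeGroup.mk [(x, true)] * _ ∈ S
          rw [hlL]; exact hmem
        change ρ (FreeGroup.of x) _ = _
        simp only [ρ, FreeGroup.lift_apply_of]
        rw [hσ x _ h3]
        exact Subtype.ext hlL
      | false =>
        have h3 : FreeGroup.of x * FreeGroup.mk ((x, false) :: L) = FreeGroup.mk L := by
          rw [← hlL]
          change FreeGroup.of x * ((FreeGroup.of x)⁻¹ * _) = _
          simp
        change ρ (FreeGroup.of x)⁻¹ _ = _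
        rw [map_inv, Equiv.Perm.inv_eq_iff_eq]
        simp only [ρ, FreeGroup.lift_apply_of]
        rw [hσ x ⟨_, hmem⟩ (by rw [h3]; exact ⟨L, hL, rfl⟩)]
        exact Subtype.ext h3.symm
  refine ⟨Equiv.Perm S, inferInstance, inferInstance, ρ, fun h => ?_⟩
  have h2 : (ρ (FreeGroup.mk L₀) ⟨1, h1⟩).1 = FreeGroup.mk L₀ :=
    congrArg Subtype.val (key L₀ (List.suffix_refl _))
  have h3 : FreeGroup.mk L₀ = g := FreeGroup.mk_toWord
  rw [h3, h, Equiv.Perm.one_apply] at h2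
  exact hg h2.symm

/-- Free groups of finite rank are Hopfian. -/
theorem freeGroup_hopf {ι : Type} [Finite ι] (f : FreeGroup ι →* FreeGroup ι)
    (hf : Function.Surjective f) : Function.Injective f := by
  rw [injective_iff_map_eq_one]
  intro x hx
  by_contra hne
  obtain ⟨P, _, _, ρ, hρ⟩ := freeGroup_residually_finite x hne
  have : Finite (FreeGroup ι →* P) := Finite.of_equiv _ FreeGroup.lift
  have hinj : Function.Injective (fun u : FreeGroup ι →* P => u.comp f) := fun u v h =>
    (MonoidHom.cancel_right hf).1 h
  obtain ⟨u, hu⟩ := Finite.surjective_of_injective hinj ρ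
  apply hρ
  rw [← hu]
  simp [hx]

open Monoid Monoid.Coprod in
/-- The Hopf property for free products of a finitely generated subgroup of a free group with free
groups of the same finite rank. -/
theorem coprod_hopf {α : Type} (A : Subgroup (FreeGroup α)) (hA : A.FG) {γ κ : Type} [Finite γ]
    [Finite κ] (hcard : Nat.card γ = Nat.card κ)
    (g : Coprod A (FreeGroup γ) →* Coprod A (FreeGroup κ)) (hg : Function.Surjective g) :
    Function.Injective g := by
  obtain ⟨ι, _, ⟨e⟩⟩ := exists_finite_basis A hA
  obtain ⟨s⟩ : Nonempty (γ ≃ κ) := Finite.card_eq.1 hcard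
  let E₁ : Coprod A (FreeGroup γ) ≃* FreeGroup (ι ⊕ γ) :=
    (MulEquiv.coprodCongr e (MulEquiv.refl _)).trans (freeCoprod ι γ)
  let E₂ : Coprod A (FreeGroup κ) ≃* FreeGroup (ι ⊕ γ) :=
    (MulEquiv.coprodCongr e (FreeGroup.freeGroupCongr s.symm)).trans (freeCoprod ι γ)
  have h := freeGroup_hopf ((E₂.toMonoidHom.comp g).comp E₁.symm.toMonoidHom)
    ((E₂.surjective.comp hg).comp E₁.symm.surjective)
  intro x y hxy
  have := @h (E₁ x) (E₁ y) (by simp [hxy])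
  exact E₁.injective this

/-! ### Pairs of minimal relative rank -/

open Monoid Monoid.Coprod in
/-- If `Y` is the free product of `X` with a free group, then so is `Y ∗ FreeGroup δ`. -/
theorem exists_absorb {X Y β : Type} [Group X] [Group Y] (i : X →* Y)
    (e : Coprod X (FreeGroup β) ≃* Y) (he : ∀ x, e (inl x) = i x) (δ : Type) :
    ∃ s : Coprod Y (FreeGroup δ) ≃* Coprod X (FreeGroup (β ⊕ δ)),
      ∀ x, s (inl (i x)) = inl x := by
  refine ⟨((MulEquiv.coprodCongr e.symm (MulEquiv.refl _)).trans
    (MulEquiv.coprodAssoc X (FreeGroup β) (FreeGroup δ))).trans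
    (MulEquiv.coprodCongr (MulEquiv.refl _) (freeCoprod β δ)), fun x => ?_⟩
  have : e.symm (i x) = inl x := by rw [← he, e.symm_apply_apply]
  simp [this]

open Monoid Monoid.Coprod in
theorem inl_surjective_of_isEmpty {X δ : Type} [Group X] [IsEmpty δ] :
    Function.Surjective (inl : X →* Coprod X (FreeGroup δ)) := by
  intro x
  induction x using Coprod.induction_on with
  | inl x => exact ⟨x, rfl⟩
  | inr c => exact ⟨1, by rw [Subsingleton.elim c 1, map_one, map_one]⟩
  | mul x y hx hy =>
    obtain ⟨a, rfl⟩ := hx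
    obtain ⟨b, rfl⟩ := hy
    exact ⟨a * b, map_mul _ _ _⟩

open Monoid Monoid.Coprod in
theorem finite_of_coprod_fg {X Y β : Type} [Group X] [Group Y] (hY : Group.FG Y)
    (e : Coprod X (FreeGroup β) ≃* Y) : Finite β :=
  finite_of_fg_freeGroup (fg_of_surjective hY
    ((snd : Coprod X (FreeGroup β) →* FreeGroup β).comp e.symm.toMonoidHom)
    (snd_surjective.comp e.symm.surjective))

open Monoid Monoid.Coprod in
/-- Killing the common subgroup, a surjection `X ∗ FreeGroup γ → X ∗ FreeGroup δ` relative to `X`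
shows that the rank of `FreeGroup δ` is at most that of `FreeGroup γ`. -/
theorem relative_rank_le {X γ δ : Type} [Group X] [Finite γ]
    (g : Coprod X (FreeGroup γ) →* Coprod X (FreeGroup δ)) (hg : Function.Surjective g)
    (hgX : ∀ x, g (inl x) = inl x) : Nat.card δ ≤ Nat.card γ := by
  let r : FreeGroup γ →* FreeGroup δ := (snd.comp g).comp inr
  have h : (snd.comp g) = r.comp snd := by
    refine Coprod.hom_ext ?_ ?_
    · ext x; simp [hgX]
    · ext x; simp [r]
  refine (free_rank_le r fun y => ?_).2
  obtain ⟨x, rfl⟩ := (snd_surjective (M := X) (N := FreeGroup δ)) y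
  obtain ⟨z, rfl⟩ := hg x
  exact ⟨snd z, (DFunLike.congr_fun h z).symm⟩

theorem subgroup_fg_map {G K : Type} [Group G] [Group K] (f : G →* K) {A : Subgroup G}
    (hA : A.FG) : (A.map f).FG := by
  classical
  obtain ⟨S, rfl⟩ := hA
  exact ⟨S.image f, by rw [Finset.coe_image, MonoidHom.map_closure]⟩

/-- Pairs of finitely generated subgroups `A ≤ A₁` lying between `A₀` and `U` such that `φ` maps `A`
into `A₁`. -/
structure IsPair {α : Type} (φ : FreeGroup α →* FreeGroup α) (A₀ U A A₁ : Subgroup (FreeGroup α)) :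
    Prop where
  base_le : A₀ ≤ A
  le : A ≤ A₁
  le_top : A₁ ≤ U
  fg : A.FG
  fg' : A₁.FG
  map_le : A.map φ ≤ A₁

open Monoid Monoid.Coprod in
/-- The subgroup `A₁` is, after adding finitely many free generators (indexed by `δ`), generated by
its subgroup `A` and `d` more elements than were added (`γ` has `d` more elements than `δ`). -/
def RelGen {α : Type} (A A₁ : Subgroup (FreeGroup α)) (hle : A ≤ A₁) (d : ℕ) : Prop :=
  ∃ (γ δ : Type) (_ : Finite γ) (_ : Finite δ) (_ : Nat.card γ = Nat.card δ + d)
    (g : Coprod A (FreeGroup γ) →* Coprod A₁ (FreeGroup δ)),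
    Function.Surjective g ∧ ∀ a, g (inl a) = inl (Subgroup.inclusion hle a)

open Monoid Monoid.Coprod in
/-- Some pair `A ≤ A₁` has `A` as a free factor of `A₁` with complement of rank `d`. -/
def ExistsFreePair {α : Type} (φ : FreeGroup α →* FreeGroup α) (A₀ U : Subgroup (FreeGroup α))
    (d : ℕ) : Prop :=
  ∃ (A A₁ : Subgroup (FreeGroup α)) (hp : IsPair φ A₀ U A A₁) (β : Type) (_ : Finite β)
    (_ : Nat.card β = d) (e : Coprod A (FreeGroup β) ≃* A₁),
    ∀ a, e (inl a) = Subgroup.inclusion hp.le a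

open Monoid Monoid.Coprod in
/-- For pairs of minimal relative rank `d`, every relative generating system of size `d` is free.
The induction is on the number of elements of a ball (large enough to contain generators of `A`)
outside `A`. With `A⁺` the hull of `A₁`, either `A⁺ = A` and `A` is a free factor of `A₁`, so that
the Hopf property applies, or the pair can be replaced by `A⁺ ≤ A₁ ⊔ φ(A⁺)`. In the second case `g`
fits into a commutative square with the corresponding map for the new pair and with two maps of free
products induced by `φ`, the first of which is injective. -/
theorem relGen_injective {α : Type} [Finite α] {φ : FreeGroup α →* FreeGroup α}
    (hφ : Function.Injective φ) {A₀ U : Subgroup (FreeGroup α)} (hU : U.map φ ≤ U) {d : ℕ}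
    (hmin : ∀ A A₁ (hp : IsPair φ A₀ U A A₁) d', RelGen A A₁ hp.le d' → d ≤ d') (N : ℕ)
    (m : ℕ) : ∀ (A A₁ : Subgroup (FreeGroup α)) (hp : IsPair φ A₀ U A A₁)
      (_ : A ≤ Subgroup.closure ((A : Set (FreeGroup α)) ∩ wordBall α (2 * N + 1)))
      (_ : (wordBall α (2 * N + 1) \ (A : Set (FreeGroup α))).ncard = m)
      (γ δ : Type) [Finite γ] [Finite δ] (_ : Nat.card γ = Nat.card δ + d)
      (g : Coprod A (FreeGroup γ) →* Coprod A₁ (FreeGroup δ))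
      (_ : Function.Surjective g) (_ : ∀ a, g (inl a) = inl (Subgroup.inclusion hp.le a)),
      Function.Injective g ∧ ExistsFreePair φ A₀ U d := by
  induction m using Nat.strong_induction_on with
  | _ m ih =>
  intro A A₁ hp hA hm γ δ _ _ hcard g hg hgA
  have hfree := hull_free_factor A₁ N
  have hA'le : hull A₁ N ≤ A₁ := hull_le A₁ N
  have hAA' : A ≤ hull A₁ N := hA.trans (Subgroup.closure_mono fun x hx => ⟨hp.le hx.1, hx.2⟩)
  have hA' : hull A₁ N ≤
      Subgroup.closure ((hull A₁ N : Set (FreeGroup α)) ∩ wordBall α (2 * N + 1)) :=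
    Subgroup.closure_mono fun x hx => ⟨Subgroup.subset_closure hx, hx.2⟩
  have hA'fg : (hull A₁ N).FG :=
    (Subgroup.fg_iff _).2 ⟨_, rfl, (wordBall_finite α _).subset Set.inter_subset_right⟩
  generalize hull A₁ N = A' at hfree hA'le hAA' hA' hA'fg
  obtain ⟨β, e, he⟩ := hfree
  have hfinβ : Finite β := finite_of_coprod_fg ((Group.fg_iff_subgroup_fg A₁).2 hp.fg') e
  have he' : ∀ a, e (inl a) = Subgroup.inclusion hA'le a := fun a => Subtype.ext (he a)
  obtain ⟨s, hs⟩ := exists_absorb (Subgroup.inclusion hA'le) e he' δ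
  have hsg : Function.Surjective (s.toMonoidHom.comp g) := s.surjective.comp hg
  have hsgA : ∀ a : A, s (g (inl a)) = inl (Subgroup.inclusion hAA' a) := fun a => by
    rw [hgA, ← hs]; rfl
  by_cases hEq : A = A'
  · -- the subgroup `A` is a free factor of `A₁`
    subst hEq
    have hdβ : d ≤ Nat.card β := by
      refine hmin A A₁ hp _ ⟨β, Empty, hfinβ, inferInstance, by simp, inl.comp e.toMonoidHom,
        inl_surjective_of_isEmpty.comp e.surjective, fun a => ?_⟩
      exact congrArg inl (he' a)
    have hle := relative_rank_le (s.toMonoidHom.comp g) hsg hsgA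
    rw [Nat.card_sum] at hle
    refine ⟨?_, A, A₁, hp, β, hfinβ, by omega, e, he'⟩
    have hinj := coprod_hopf A hp.fg (by rw [Nat.card_sum]; omega) _ hsg
    exact fun x y hxy => hinj (congrArg s hxy)
  · -- the pair is replaced by `A' ≤ A₁ ⊔ φ(A')`
    set A₂ := A₁ ⊔ A'.map φ with hA₂
    have hp' : IsPair φ A₀ U A' A₂ :=
      { base_le := hp.base_le.trans hAA'
        le := hA'le.trans le_sup_left
        le_top := sup_le hp.le_top ((Subgroup.map_mono (hA'le.trans hp.le_top)).trans hU)
        fg := hA'fg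
        fg' := hp.fg'.sup (subgroup_fg_map φ hA'fg)
        map_le := le_sup_right }
    have hlt : (wordBall α (2 * N + 1) \ (A' : Set (FreeGroup α))).ncard < m := by
      rw [← hm]
      refine Set.ncard_lt_ncard ?_ ((wordBall_finite α _).subset Set.sdiff_subset)
      refine ⟨Set.sdiff_subset_sdiff_right hAA', fun hsub => hEq (le_antisymm hAA' ?_)⟩
      refine hA'.trans ((Subgroup.closure_le _).2 fun x hx => ?_)
      by_contra hxA
      exact (hsub ⟨hx.2, hxA⟩).2 hx.1
    let φ' : A' →* A₂ := (φ.comp A'.subtype).codRestrict A₂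
      fun a => hp'.map_le ⟨a, a.2, rfl⟩
    let φA : A →* A₁ := (φ.comp A.subtype).codRestrict A₁ fun a => hp.map_le ⟨a, a.2, rfl⟩
    have hφ' : Function.Injective φ' := fun a b hab =>
      Subtype.ext (hφ (congrArg Subtype.val hab))
    have hφA : Function.Injective φA := fun a b hab =>
      Subtype.ext (hφ (congrArg Subtype.val hab))
    let Φ : Coprod A' (FreeGroup (β ⊕ δ)) →* Coprod A₂ (FreeGroup (β ⊕ δ)) :=
      Coprod.map φ' (MonoidHom.id _)
    let Ψ : Coprod A₁ (FreeGroup γ) →* Coprod A₂ (FreeGroup (β ⊕ δ)) :=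
      lift (inl.comp (Subgroup.inclusion le_sup_left))
        (FreeGroup.lift fun c => Φ (s (g (inr (FreeGroup.of c)))))
    have hΨl : ∀ a, Ψ (inl a) = inl (Subgroup.inclusion le_sup_left a) := fun a => by simp [Ψ]
    have hcomm : Ψ.comp (Coprod.map φA (MonoidHom.id _)) = Φ.comp (s.toMonoidHom.comp g) := by
      refine Coprod.hom_ext ?_ ?_
      · ext a
        change Ψ (Coprod.map φA (MonoidHom.id _) (inl a)) = Φ (s (g (inl a)))
        rw [map_apply_inl, hΨl, hsgA]
        simp only [Φ, map_apply_inl]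
        rfl
      · refine FreeGroup.ext_hom _ _ fun c => ?_
        change Ψ (Coprod.map φA (MonoidHom.id _) (inr (FreeGroup.of c))) =
          Φ (s (g (inr (FreeGroup.of c))))
        rw [map_apply_inr]
        simp [Ψ]
    have hΦΨ : ∀ x, Φ x ∈ Ψ.range := by
      intro x
      obtain ⟨y, rfl⟩ := hsg x
      exact ⟨_, DFunLike.congr_fun hcomm y⟩
    have hΨsurj : Function.Surjective Ψ := by
      have h1 : A₂ ≤ (Ψ.range.comap (inl : A₂ →* Coprod A₂ (FreeGroup (β ⊕ δ)))).map
          A₂.subtype := by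
        refine sup_le ?_ ?_
        · intro a ha
          exact ⟨⟨a, le_sup_left (a := A₁) ha⟩, ⟨inl ⟨a, ha⟩, hΨl _⟩, rfl⟩
        · rintro _ ⟨a, ha, rfl⟩
          refine ⟨φ' ⟨a, ha⟩, ?_, rfl⟩
          have := hΦΨ (inl ⟨a, ha⟩)
          rwa [map_apply_inl] at this
      intro x
      change x ∈ Ψ.range
      induction x using Coprod.induction_on with
      | inl a =>
        obtain ⟨b, hb, hba⟩ := h1 a.2
        rw [← Subtype.ext hba]
        exact hb
      | inr c =>
        have := hΦΨ (inr c)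
        rwa [map_apply_inr] at this
      | mul x y hx hy => exact mul_mem hx hy
    obtain ⟨s', hs'⟩ := exists_absorb (Subgroup.inclusion hA'le) e he' γ
    obtain ⟨hinj, hgood⟩ := ih _ hlt A' A₂ hp' hA' rfl (β ⊕ γ) (β ⊕ δ)
      (by rw [Nat.card_sum, Nat.card_sum]; omega) (Ψ.comp s'.symm.toMonoidHom)
      (hΨsurj.comp s'.symm.surjective) (fun a => by
        change Ψ (s'.symm (inl a)) = _
        rw [← hs', s'.symm_apply_apply, hΨl]
        rfl)
    refine ⟨?_, hgood⟩
    have hΨinj : Function.Injective Ψ := fun x y hxy => by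
      have := @hinj (s' x) (s' y) (by simpa using hxy)
      exact s'.injective this
    have h2 : Function.Injective (Φ.comp (s.toMonoidHom.comp g)) := by
      rw [← hcomm]
      exact hΨinj.comp (coprod_map_injective φA hφA)
    exact fun x y hxy => h2 (congrArg (fun z => Φ (s z)) hxy)

theorem exists_wordBall_generators {α : Type} (A : Subgroup (FreeGroup α)) (hA : A.FG) :
    ∃ N, A ≤ Subgroup.closure ((A : Set (FreeGroup α)) ∩ wordBall α (2 * N + 1)) := by
  obtain ⟨S, hS, hfin⟩ := (Subgroup.fg_iff A).1 hA
  have : ∃ N, S ⊆ wordBall α N := by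
    clear hS
    induction S, hfin using Set.Finite.induction_on with
    | empty => exact ⟨0, Set.empty_subset _⟩
    | insert _ _ ih =>
      rename_i a S _ _
      obtain ⟨N, hN⟩ := ih
      obtain ⟨M, hM⟩ := exists_mem_wordBall a
      refine ⟨max M N, Set.insert_subset (wordBall_mono (le_max_left _ _) hM)
        (hN.trans (wordBall_mono (le_max_right _ _)))⟩
  obtain ⟨N, hN⟩ := this
  refine ⟨N, ?_⟩
  conv_lhs => rw [← hS]
  refine Subgroup.closure_mono fun x hx => ⟨?_, wordBall_mono (by omega) (hN hx)⟩
  rw [← hS]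
  exact Subgroup.subset_closure hx

open Monoid Monoid.Coprod in
/-- There is a pair `A ≤ A₁` with `A₁ = A ∗ FreeGroup β` such that, for every pair `B ≤ B₁`, a
generating system of `B₁` relative to `B` indexed by `β` is free. -/
theorem exists_good_pair {α : Type} [Finite α] {φ : FreeGroup α →* FreeGroup α}
    (hφ : Function.Injective φ) {A₀ U : Subgroup (FreeGroup α)} (hA₀ : A₀.FG) (hA₀U : A₀ ≤ U)
    (hU : U.map φ ≤ U) :
    ∃ (A A₁ : Subgroup (FreeGroup α)) (hp : IsPair φ A₀ U A A₁) (β : Type) (_ : Finite β)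
      (e : Coprod A (FreeGroup β) ≃* A₁),
      (∀ a, e (inl a) = Subgroup.inclusion hp.le a) ∧
      ∀ (B B₁ : Subgroup (FreeGroup α)) (hB : IsPair φ A₀ U B B₁)
        (g : Coprod B (FreeGroup β) →* B₁), Function.Surjective g →
        (∀ b, g (inl b) = Subgroup.inclusion hB.le b) → Function.Injective g := by
  classical
  have hp₀ : IsPair φ A₀ U A₀ (A₀ ⊔ A₀.map φ) :=
    { base_le := le_rfl
      le := le_sup_left
      le_top := sup_le hA₀U ((Subgroup.map_mono hA₀U).trans hU)
      fg := hA₀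
      fg' := hA₀.sup (subgroup_fg_map φ hA₀)
      map_le := le_sup_right }
  have hex : ∃ d, ∃ A A₁, ∃ hp : IsPair φ A₀ U A A₁, RelGen A A₁ hp.le d := by
    have : Group.FG ↥(A₀ ⊔ A₀.map φ) := (Group.fg_iff_subgroup_fg _).2 hp₀.fg'
    obtain ⟨γ, _, f, hf⟩ := Group.fg_iff_exists_freeGroup_hom_surjective_finite.1 this
    refine ⟨Nat.card γ, A₀, _, hp₀, γ, Empty, inferInstance, inferInstance, by simp,
      inl.comp (lift (Subgroup.inclusion hp₀.le) f), ?_, fun a => by simp⟩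
    refine inl_surjective_of_isEmpty.comp fun x => ?_
    obtain ⟨w, rfl⟩ := hf x
    exact ⟨inr w, by simp⟩
  have hmin : ∀ A A₁ (hp : IsPair φ A₀ U A A₁) d', RelGen A A₁ hp.le d' → Nat.find hex ≤ d' :=
    fun A A₁ hp d' h => Nat.find_min' hex ⟨A, A₁, hp, h⟩
  obtain ⟨A, A₁, hp, γ, δ, _, _, hcard, g, hg, hgA⟩ := Nat.find_spec hex
  obtain ⟨N, hN⟩ := exists_wordBall_generators A hp.fg
  obtain ⟨-, A', A₁', hp', β, hβ, hcβ, e, he⟩ :=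
    relGen_injective hφ hU hmin N _ A A₁ hp hN rfl γ δ hcard g hg hgA
  refine ⟨A', A₁', hp', β, hβ, e, he, fun B B₁ hB g hg hgB => ?_⟩
  obtain ⟨M, hM⟩ := exists_wordBall_generators B hB.fg
  have := (relGen_injective hφ hU hmin M _ B B₁ hB hM rfl β Empty (by simpa using hcβ)
    (inl.comp g) (inl_surjective_of_isEmpty.comp hg) (fun b => by simp [hgB])).1
  exact fun x y hxy => this (congrArg inl hxy)

/-! ### Finite presentation of subgroups with a stable letter -/

open Monoid Monoid.Coprod in
/-- Faithfulness of an HNN presentation with stable letter `t`. Let `(A, A₁, y)` be a pair such that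
all relative generating systems of its size are free, and let `θ : Q → G` be a homomorphism from a
group generated by a copy `j` of `A₁` and an element `t` that conjugates `A` as prescribed by `φ`.
Then `θ` is injective, since the subgroups generated by `A₁` and `t ^ i * y * t ^ (-i)`, for
`i ≤ k`, are successive free products with the free group on `y`, both in `Q` and in the image. -/
theorem injective_of_good_pair {α β G Q : Type} [Group G] [Group Q]
    {ι : FreeGroup α →* G} (hι : Function.Injective ι)
    {φ : FreeGroup α →* FreeGroup α} {h : G} (hh : ∀ f, h * ι f * h⁻¹ = ι (φ f))
    (deg : G →* Multiplicative ℤ) (hdι : ∀ f, deg (ι f) = 1) (hdh : deg h ≠ 1)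
    {A₀ U A A₁ : Subgroup (FreeGroup α)} (hU : U.map φ ≤ U) (hp : IsPair φ A₀ U A A₁)
    [Finite β] (e : Coprod A (FreeGroup β) ≃* A₁)
    (he : ∀ a, e (inl a) = Subgroup.inclusion hp.le a)
    (hgood : ∀ (B B₁ : Subgroup (FreeGroup α)) (hB : IsPair φ A₀ U B B₁)
        (g : Coprod B (FreeGroup β) →* B₁), Function.Surjective g →
        (∀ b, g (inl b) = Subgroup.inclusion hB.le b) → Function.Injective g)
    (θ : Q →* G) (j : A₁ →* Q) (t : Q) (hθj : ∀ a, θ (j a) = ι a) (hθt : θ t = h)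
    (hrel : ∀ a : A, t * j (Subgroup.inclusion hp.le a) * t⁻¹ = j ⟨φ a, hp.map_le ⟨a, a.2, rfl⟩⟩)
    (htop : Subgroup.closure (Set.range j ∪ {t}) = ⊤) :
    Function.Injective θ := by
  let y : β → A₁ := fun c => e (inr (FreeGroup.of c))
  have hA₁ : A₁ ≤ A ⊔ Subgroup.closure (Set.range fun c => ((y c : A₁) : FreeGroup α)) := by
    have key : ∀ x, ((e x : A₁) : FreeGroup α) ∈
        A ⊔ Subgroup.closure (Set.range fun c => ((y c : A₁) : FreeGroup α)) := by
      intro x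
      induction x using Coprod.induction_on with
      | inl a => rw [he]; exact Subgroup.mem_sup_left a.2
      | inr w =>
        refine Subgroup.mem_sup_right ?_
        induction w using FreeGroup.induction_on with
        | C1 => rw [map_one, map_one]; exact one_mem _
        | of c => exact Subgroup.subset_closure ⟨c, rfl⟩
        | inv_of c hc => rw [map_inv, map_inv]; exact inv_mem hc
        | mul u v hu hv => rw [map_mul, map_mul]; exact mul_mem hu hv
      | mul u v hu hv => rw [map_mul]; exact mul_mem hu hv
    intro x hx
    have := key (e.symm ⟨x, hx⟩)
    rwa [e.apply_symm_apply] at this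
  -- the chain of subgroups of the free group
  obtain ⟨D, hD0, hD⟩ : ∃ D : ℕ → Subgroup (FreeGroup α), D 0 = A₁ ∧
      ∀ k, D (k + 1) = D k ⊔ Subgroup.closure (Set.range fun c => φ^[k + 1] (y c)) :=
    ⟨fun k => Nat.rec A₁
      (fun k Dk => Dk ⊔ Subgroup.closure (Set.range fun c => φ^[k + 1] (y c))) k,
      rfl, fun _ => rfl⟩
  have hDmono : ∀ k, D k ≤ D (k + 1) := fun k => by rw [hD k]; exact le_sup_left
  have hDy : ∀ k c, φ^[k] (y c) ∈ D k := by
    intro k c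
    cases k with
    | zero => rw [hD0]; exact (y c).2
    | succ k => rw [hD k]; exact Subgroup.mem_sup_right (Subgroup.subset_closure ⟨c, rfl⟩)
  have hmapcl : ∀ k, (Subgroup.closure (Set.range fun c => φ^[k] (y c))).map φ ≤ D (k + 1) := by
    intro k
    rw [MonoidHom.map_closure, Subgroup.closure_le]
    rintro _ ⟨_, ⟨c, rfl⟩, rfl⟩
    have := hDy (k + 1) c
    rwa [Function.iterate_succ_apply'] at this
  have hDmap : ∀ k, (D k).map φ ≤ D (k + 1) := by
    intro k
    induction k with
    | zero =>
      have h0 := hDmono 0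
      rw [hD0] at h0 ⊢
      refine (Subgroup.map_mono hA₁).trans ?_
      rw [Subgroup.map_sup]
      exact sup_le (hp.map_le.trans h0) (hmapcl 0)
    | succ k ih =>
      rw [hD k, Subgroup.map_sup]
      exact sup_le (ih.trans (hDmono _)) (hmapcl _)
  have hyU : ∀ k c, φ^[k] (y c) ∈ U := by
    intro k c
    induction k with
    | zero => exact hp.le_top (y c).2
    | succ k ih =>
      rw [Function.iterate_succ_apply']
      exact hU ⟨_, ih, rfl⟩
  have hDU : ∀ k, D k ≤ U := by
    intro k
    induction k with
    | zero => rw [hD0]; exact hp.le_top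
    | succ k ih =>
      rw [hD k]
      refine sup_le ih ((Subgroup.closure_le _).2 ?_)
      rintro _ ⟨c, rfl⟩
      exact hyU _ _
  have hDfg : ∀ k, (D k).FG := by
    intro k
    induction k with
    | zero => rw [hD0]; exact hp.fg'
    | succ k ih => rw [hD k]; exact ih.sup ((Subgroup.fg_iff _).2 ⟨_, rfl, Set.finite_range _⟩)
  have hDbase : ∀ k, A₀ ≤ D k := by
    intro k
    induction k with
    | zero => rw [hD0]; exact hp.base_le.trans hp.le
    | succ k ih => exact ih.trans (hDmono k)
  have hpair : ∀ k, IsPair φ A₀ U (D k) (D (k + 1)) := fun k =>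
    ⟨hDbase k, hDmono k, hDU (k + 1), hDfg k, hDfg (k + 1), hDmap k⟩
  -- the corresponding chain in `Q`
  let z : ℕ → β → Q := fun k c => t ^ k * j (y c) * (t ^ k)⁻¹
  have hθz : ∀ k c, θ (z k c) = ι (φ^[k] (y c)) := by
    intro k c
    induction k with
    | zero => simp [z, hθj]
    | succ k ih =>
      have : z (k + 1) c = t * z k c * t⁻¹ := by
        simp only [z, pow_succ' t, mul_inv_rev, mul_assoc]
      rw [this, map_mul, map_mul, map_inv, ih, hθt, hh, Function.iterate_succ_apply']
  obtain ⟨B, hB0, hB⟩ : ∃ B : ℕ → Subgroup Q, B 0 = j.range ∧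
      ∀ k, B (k + 1) = B k ⊔ Subgroup.closure (Set.range fun c => z (k + 1) c) :=
    ⟨fun k => Nat.rec j.range
      (fun k Bk => Bk ⊔ Subgroup.closure (Set.range fun c => z (k + 1) c)) k,
      rfl, fun _ => rfl⟩
  have hBmono : Monotone B :=
    monotone_nat_of_le_succ fun k => by rw [hB k]; exact le_sup_left
  have hjB : ∀ k a, j a ∈ B k := fun k a => by
    have : j a ∈ B 0 := by rw [hB0]; exact ⟨a, rfl⟩
    exact hBmono (Nat.zero_le k) this
  have hBz : ∀ k c, z k c ∈ B k := by
    intro k c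
    cases k with
    | zero => rw [hB0]; exact ⟨y c, by simp [z]⟩
    | succ k => rw [hB k]; exact Subgroup.mem_sup_right (Subgroup.subset_closure ⟨c, rfl⟩)
  have hclz : ∀ k, Subgroup.closure (Set.range fun c => z k c) ≤
      (B (k + 1)).comap (MulAut.conj t).toMonoidHom := by
    intro k
    rw [Subgroup.closure_le]
    rintro _ ⟨c, rfl⟩
    have h1 := hBz (k + 1) c
    have : z (k + 1) c = t * z k c * t⁻¹ := by
      simp only [z, pow_succ' t, mul_inv_rev, mul_assoc]
    rw [this] at h1
    exact h1
  have hBconj : ∀ k, B k ≤ (B (k + 1)).comap (MulAut.conj t).toMonoidHom := by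
    intro k
    induction k with
    | zero =>
      have h1 : A₁ ≤ ((((B 1).comap (MulAut.conj t).toMonoidHom).comap j).map A₁.subtype) := by
        refine hA₁.trans (sup_le ?_ ((Subgroup.closure_le _).2 ?_))
        · intro a ha
          refine ⟨⟨a, hp.le ha⟩, ?_, rfl⟩
          change t * j (Subgroup.inclusion hp.le ⟨a, ha⟩) * t⁻¹ ∈ B 1
          rw [hrel]
          exact hjB 1 _
        · rintro _ ⟨c, rfl⟩
          refine ⟨y c, ?_, rfl⟩
          have := hclz 0 (Subgroup.subset_closure ⟨c, rfl⟩)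
          simpa [z] using this
      rw [hB0]
      rintro _ ⟨a, rfl⟩
      obtain ⟨b, hb, hba⟩ := h1 a.2
      rw [← Subtype.ext hba]
      exact hb
    | succ k ih =>
      rw [hB k]
      exact sup_le (ih.trans (Subgroup.comap_mono (hBmono (Nat.le_succ (k + 1))))) (hclz _)
  -- partial inverses of `θ`
  have hψ : ∀ k, ∃ ψ : D k →* Q, (∀ x, θ (ψ x) = ι x) ∧ ψ.range = B k := by
    intro k
    induction k with
    | zero => rw [hD0]; exact ⟨j, hθj, hB0.symm⟩
    | succ k ih =>
      obtain ⟨ψ, hψ1, hψ2⟩ := ih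
      let g : Coprod (D k) (FreeGroup β) →* D (k + 1) :=
        lift (Subgroup.inclusion (hDmono k))
          (FreeGroup.lift fun c => ⟨φ^[k + 1] (y c), hDy (k + 1) c⟩)
      have hgl : ∀ a, g (inl a) = Subgroup.inclusion (hDmono k) a := fun a => by simp [g]
      have hgr : ∀ c, g (inr (FreeGroup.of c)) = ⟨φ^[k + 1] (y c), hDy (k + 1) c⟩ :=
        fun c => by simp [g]
      have hgs : Function.Surjective g := by
        have h1 : D (k + 1) ≤ g.range.map (D (k + 1)).subtype := by
          refine (hD k).le.trans (sup_le ?_ ((Subgroup.closure_le _).2 ?_))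
          · exact fun a ha => ⟨_, ⟨inl ⟨a, ha⟩, rfl⟩, by rw [hgl]; rfl⟩
          · rintro _ ⟨c, rfl⟩
            exact ⟨_, ⟨inr (FreeGroup.of c), rfl⟩, by rw [hgr]; rfl⟩
        intro x
        obtain ⟨b, ⟨w, hw⟩, hba⟩ := h1 x.2
        exact ⟨w, by rw [hw]; exact Subtype.ext hba⟩
      have hgi : Function.Injective g := hgood _ _ (hpair k) g hgs hgl
      let E := MulEquiv.ofBijective g ⟨hgi, hgs⟩
      let Ψ : Coprod (D k) (FreeGroup β) →* Q := lift ψ (FreeGroup.lift fun c => z (k + 1) c)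
      have hΨ : θ.comp Ψ = (ι.comp (D (k + 1)).subtype).comp g := by
        refine Coprod.hom_ext ?_ ?_
        · ext a
          change θ (Ψ (inl a)) = ι (g (inl a))
          rw [hgl]
          simp only [Ψ, lift_apply_inl]
          exact hψ1 a
        · refine FreeGroup.ext_hom _ _ fun c => ?_
          change θ (Ψ (inr (FreeGroup.of c))) = ι (g (inr (FreeGroup.of c)))
          rw [hgr]
          simp only [Ψ, lift_apply_inr, FreeGroup.lift_apply_of]
          exact hθz _ _
      refine ⟨Ψ.comp E.symm.toMonoidHom, fun x => ?_, ?_⟩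
      · have h1 := DFunLike.congr_fun hΨ (E.symm x)
        have h2 : g (E.symm x) = x := E.apply_symm_apply x
        change θ (Ψ (E.symm x)) = ι (g (E.symm x)) at h1
        rw [h2] at h1
        exact h1
      · rw [MonoidHom.range_comp, MonoidHom.range_eq_top.2 E.symm.surjective,
          ← MonoidHom.range_eq_map, range_lift, hψ2, hB k, FreeGroup.range_lift_eq_closure]
  have hBinj : ∀ k, ∀ b ∈ B k, θ b = 1 → b = 1 := by
    intro k b hb hb1
    obtain ⟨ψ, h1, h2⟩ := hψ k
    rw [← h2] at hb
    obtain ⟨x, rfl⟩ := hb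
    rw [h1, map_eq_one_iff ι hι] at hb1
    rw [(Subtype.ext hb1 : x = 1), map_one]
  have hBdeg : ∀ k, ∀ b ∈ B k, deg (θ b) = 1 := by
    intro k b hb
    obtain ⟨ψ, h1, h2⟩ := hψ k
    rw [← h2] at hb
    obtain ⟨x, rfl⟩ := hb
    rw [h1, hdι]
  have hBpow : ∀ (p k : ℕ), ∀ b ∈ B k, t ^ p * b * (t ^ p)⁻¹ ∈ B (k + p) := by
    intro p
    induction p with
    | zero => intro k b hb; simpa using hb
    | succ p ih =>
      intro k b hb
      have h1 := hBconj _ (ih k b hb)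
      have h2 : t ^ (p + 1) * b * (t ^ (p + 1))⁻¹ = t * (t ^ p * b * (t ^ p)⁻¹) * t⁻¹ := by
        simp only [pow_succ' t, mul_inv_rev, mul_assoc]
      rw [h2]
      exact h1
  -- normal forms of the elements of `Q`
  have hnf : ∀ q : Q, ∃ p r k : ℕ, ∃ b ∈ B k, q = (t ^ p)⁻¹ * b * t ^ r := by
    intro q
    have hq : q ∈ Subgroup.closure (Set.range j ∪ {t}) := by rw [htop]; exact Subgroup.mem_top q
    have hjstep : ∀ (a : A₁) (q : Q), (∃ p r k : ℕ, ∃ b ∈ B k, q = (t ^ p)⁻¹ * b * t ^ r) →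
        ∃ p r k : ℕ, ∃ b ∈ B k, j a * q = (t ^ p)⁻¹ * b * t ^ r := by
      rintro a _ ⟨p, r, k, b, hb, rfl⟩
      refine ⟨p, r, k + (0 + p), (t ^ p * j a * (t ^ p)⁻¹) * b,
        mul_mem (hBmono (by omega) (hBpow p 0 (j a) (hjB 0 a))) (hBmono (by omega) hb), ?_⟩
      simp only [mul_assoc, inv_mul_cancel_left]
    induction hq using Subgroup.closure_induction_left with
    | one => exact ⟨0, 0, 0, 1, one_mem _, by simp⟩
    | mul_left x hx q _ ih =>
      rcases hx with ⟨a, rfl⟩ | hx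
      · exact hjstep a _ ih
      · obtain ⟨p, r, k, b, hb, rfl⟩ := ih
        rw [Set.mem_singleton_iff.1 hx]
        cases p with
        | zero =>
          refine ⟨0, r + 1, k + 1, t * b * t⁻¹, hBconj k hb, ?_⟩
          simp [pow_succ' t, mul_assoc]
        | succ p =>
          refine ⟨p, r, k, b, hb, ?_⟩
          rw [pow_succ t]
          simp [mul_assoc]
    | inv_mul_cancel x hx q _ ih =>
      rcases hx with ⟨a, rfl⟩ | hx
      · rw [← map_inv]; exact hjstep a⁻¹ _ ih
      · obtain ⟨p, r, k, b, hb, rfl⟩ := ih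
        rw [Set.mem_singleton_iff.1 hx]
        refine ⟨p + 1, r, k, b, hb, ?_⟩
        rw [pow_succ t]
        simp [mul_assoc]
  rw [injective_iff_map_eq_one]
  intro q hq
  obtain ⟨p, r, k, b, hb, rfl⟩ := hnf q
  have hpr : r = p := by
    have h1 := congrArg deg hq
    simp only [map_mul, map_inv, map_pow, map_one, hBdeg k b hb, hθt, mul_one] at h1
    rw [inv_mul_eq_one] at h1
    have h2 := congrArg Multiplicative.toAdd h1
    simp only [toAdd_pow, nsmul_eq_mul] at h2
    have h3 : Multiplicative.toAdd (deg h) ≠ 0 := fun h0 => hdh (Multiplicative.toAdd.injective h0)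
    exact_mod_cast (mul_right_cancel₀ h3 h2).symm
  subst hpr
  have hb1 : b = 1 := by
    refine hBinj k b hb ?_
    rw [map_mul, map_mul, map_inv] at hq
    rw [mul_assoc, inv_mul_eq_one] at hq
    exact mul_eq_right.1 hq.symm
  rw [hb1, mul_one, inv_mul_cancel]

open Monoid Monoid.Coprod in
/-- A subgroup generated by a finitely generated subgroup of a free group and an element `h`
conjugating the free group into itself is finitely presented, if the powers of `h` are separated
from the free group by a homomorphism to `ℤ`. -/
theorem finitelyPresented_of_stable_letter {α G : Type} [Finite α] [Group G]
    {ι : FreeGroup α →* G} (hι : Function.Injective ι)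
    {φ : FreeGroup α →* FreeGroup α} (hφ : Function.Injective φ)
    {h : G} (hh : ∀ f, h * ι f * h⁻¹ = ι (φ f))
    (deg : G →* Multiplicative ℤ) (hdι : ∀ f, deg (ι f) = 1) (hdh : deg h ≠ 1)
    {A₀ : Subgroup (FreeGroup α)} (hA₀ : A₀.FG) :
    Group.IsFinitelyPresented ↥(A₀.map ι ⊔ Subgroup.zpowers h) := by
  set H := A₀.map ι ⊔ Subgroup.zpowers h with hH
  have hhH : h ∈ H := Subgroup.mem_sup_right (Subgroup.mem_zpowers h)
  have hA₀U : A₀ ≤ H.comap ι := fun a ha => Subgroup.mem_sup_left ⟨a, ha, rfl⟩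
  have hU : (H.comap ι).map φ ≤ H.comap ι := by
    rintro _ ⟨f, hf, rfl⟩
    change ι (φ f) ∈ H
    rw [← hh]
    exact mul_mem (mul_mem hhH hf) (inv_mem hhH)
  obtain ⟨A, A₁, hp, β, _, e, he, hgood⟩ := exists_good_pair hφ hA₀ hA₀U hU
  have hAfg : Group.FG A := (Group.fg_iff_subgroup_fg A).2 hp.fg
  obtain ⟨S, hS⟩ := hAfg.out
  obtain ⟨b, _, ⟨E⟩⟩ := exists_finite_basis A₁ hp.fg'
  have : Group.IsFinitelyPresented A₁ := Group.IsFinitelyPresented.equiv E.symm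
  let φA : A →* A₁ := (φ.comp A.subtype).codRestrict A₁ fun a => hp.map_le ⟨a, a.2, rfl⟩
  obtain ⟨t₀, ht₀⟩ : ∃ t₀ : Coprod A₁ (FreeGroup Unit), t₀ = inr (FreeGroup.of ()) := ⟨_, rfl⟩
  let rel : A → Coprod A₁ (FreeGroup Unit) := fun a =>
    t₀ * inl (Subgroup.inclusion hp.le a) * t₀⁻¹ * (inl (φA a))⁻¹
  let K : Subgroup (Coprod A₁ (FreeGroup Unit)) := Subgroup.normalClosure (rel '' S)
  have hQ : Group.IsFinitelyPresented (Coprod A₁ (FreeGroup Unit) ⧸ K) :=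
    Group.IsFinitelyPresented.quotient K ⟨_, S.finite_toSet.image rel, rfl⟩
  let π : Coprod A₁ (FreeGroup Unit) →* Coprod A₁ (FreeGroup Unit) ⧸ K := QuotientGroup.mk' K
  have hrel : ∀ a : A, π t₀ * π (inl (Subgroup.inclusion hp.le a)) * (π t₀)⁻¹ =
      π (inl (φA a)) := by
    have : ((MulAut.conj (π t₀)).toMonoidHom.comp (π.comp (inl.comp (Subgroup.inclusion hp.le)))) =
        π.comp (inl.comp φA) := by
      refine MonoidHom.eq_of_eqOn_dense hS fun a ha => ?_
      change π t₀ * π (inl (Subgroup.inclusion hp.le a)) * (π t₀)⁻¹ = π (inl (φA a))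
      rw [← mul_inv_eq_one, ← map_inv π, ← map_inv π, ← map_mul π, ← map_mul π, ← map_mul π]
      exact (QuotientGroup.eq_one_iff _).2 (Subgroup.subset_normalClosure ⟨a, ha, rfl⟩)
    exact fun a => DFunLike.congr_fun this a
  let θ₀ : Coprod A₁ (FreeGroup Unit) →* G := lift (ι.comp A₁.subtype) (FreeGroup.lift fun _ => h)
  have hθ₀t : θ₀ t₀ = h := by simp [θ₀, ht₀]
  have hθ₀l : ∀ a, θ₀ (inl a) = ι a := fun a => by simp [θ₀]
  have hK : K ≤ θ₀.ker := by
    refine Subgroup.normalClosure_le_normal ?_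
    rintro _ ⟨a, _, rfl⟩
    change θ₀ (rel a) = 1
    simp only [rel, map_mul, map_inv, hθ₀t, hθ₀l]
    rw [mul_inv_eq_one]
    exact hh a
  let θ : Coprod A₁ (FreeGroup Unit) ⧸ K →* G := QuotientGroup.lift K θ₀ hK
  have hθπ : ∀ x, θ (π x) = θ₀ x := fun x => QuotientGroup.lift_mk' K hK x
  have htop : Subgroup.closure
      (Set.range (π.comp (inl : A₁ →* Coprod A₁ (FreeGroup Unit))) ∪ {π t₀}) = ⊤ := by
    rw [eq_top_iff]
    rintro q -
    obtain ⟨x, rfl⟩ := QuotientGroup.mk'_surjective K q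
    change π x ∈ _
    induction x using Coprod.induction_on with
    | inl a => exact Subgroup.subset_closure (Or.inl ⟨a, rfl⟩)
    | inr w =>
      induction w using FreeGroup.induction_on with
      | C1 => rw [map_one, map_one]; exact one_mem _
      | of c => exact Subgroup.subset_closure (Or.inr (by rw [ht₀]; rfl))
      | inv_of c hc => rw [map_inv, map_inv]; exact inv_mem hc
      | mul u v hu hv => rw [map_mul, map_mul]; exact mul_mem hu hv
    | mul u v hu hv => rw [map_mul]; exact mul_mem hu hv
  have hinj : Function.Injective θ :=
    injective_of_good_pair hι hh deg hdι hdh hU hp e he hgood θ (π.comp inl) (π t₀)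
      (fun a => (hθπ _).trans (hθ₀l a)) ((hθπ _).trans hθ₀t) hrel htop
  have hrange : θ.range = H := by
    apply le_antisymm
    · rw [MonoidHom.range_eq_map, ← htop, MonoidHom.map_closure, Subgroup.closure_le]
      rintro _ ⟨_, ⟨a, rfl⟩ | hx, rfl⟩
      · change θ (π (inl a)) ∈ H
        rw [hθπ, hθ₀l]
        exact hp.le_top a.2
      · rw [Set.mem_singleton_iff.1 hx, hθπ, hθ₀t]
        exact hhH
    · refine sup_le ?_ (Subgroup.zpowers_le.2 ⟨π t₀, (hθπ _).trans hθ₀t⟩)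
      rintro _ ⟨a, ha, rfl⟩
      exact ⟨π (inl ⟨a, hp.le (hp.base_le ha)⟩), (hθπ _).trans (hθ₀l _)⟩
  exact Group.IsFinitelyPresented.equiv
    ((MonoidHom.ofInjective hinj).trans (MulEquiv.subgroupCongr hrange))

/-! ### Ascending HNN extensions -/

/-- An abstract form of the theorem, for a group `G` generated by an embedded free group and an
element `t` that conjugates it into itself by `φ` and has degree one for a homomorphism to `ℤ`
which is trivial on the free group. The kernel of that homomorphism is the increasing union of the
subgroups `t ^ (-m) * ι F * t ^ m`. -/
theorem isFinitelyPresented_of_ascending {α G : Type} [Finite α] [Group G]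
    {ι : FreeGroup α →* G} (hι : Function.Injective ι)
    {φ : FreeGroup α →* FreeGroup α} (hφ : Function.Injective φ)
    {t : G} (ht : ∀ f, t * ι f * t⁻¹ = ι (φ f))
    (deg : G →* Multiplicative ℤ) (hdι : ∀ f, deg (ι f) = 1)
    (hdt : deg t = Multiplicative.ofAdd 1)
    (htop : Subgroup.closure (Set.range ι ∪ {t}) = ⊤)
    (H : Subgroup G) (hH : H.FG) : Group.IsFinitelyPresented H := by
  obtain ⟨I, hI⟩ : ∃ I : ℕ → FreeGroup α →* G, ∀ m f, I m f = (t ^ m)⁻¹ * ι f * t ^ m :=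
    ⟨fun m => (MulAut.conj (t ^ m)⁻¹).toMonoidHom.comp ι, fun m f => by
      change (t ^ m)⁻¹ * ι f * (t ^ m)⁻¹⁻¹ = _
      rw [inv_inv]⟩
  have hI0 : ∀ f, I 0 f = ι f := fun f => by simp [hI]
  have hIinj : ∀ m, Function.Injective (I m) := by
    intro m a b hab
    rw [hI, hI] at hab
    exact hι (mul_left_cancel (mul_right_cancel hab))
  have hIsucc : ∀ m f, t⁻¹ * I m f * t = I (m + 1) f := by
    intro m f
    rw [hI, hI, pow_succ t, mul_inv_rev]
    simp only [mul_assoc]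
  have hIstep : ∀ m f, I (m + 1) (φ f) = I m f := by
    intro m f
    rw [hI, hI, ← ht, pow_succ' t, mul_inv_rev]
    simp only [mul_assoc, inv_mul_cancel_left]
  have hIconj : ∀ m f, t * I m f * t⁻¹ = I m (φ f) := by
    intro m f
    rw [← hIstep m f, ← hIsucc]
    group
  have hImono : Monotone fun m => (I m).range := by
    refine monotone_nat_of_le_succ fun m => ?_
    rintro _ ⟨f, rfl⟩
    exact ⟨φ f, hIstep m f⟩
  have hIdeg : ∀ m f, deg (I m f) = 1 := by
    intro m f
    rw [hI, map_mul, map_mul, hdι, mul_one, ← map_mul, inv_mul_cancel, map_one]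
  -- normal forms
  have hnf : ∀ g : G, ∃ (m : ℕ) (f : FreeGroup α) (k : ℤ), g = I m f * t ^ k := by
    intro g
    have hg : g ∈ Subgroup.closure (Set.range ι ∪ {t}) := by rw [htop]; exact Subgroup.mem_top g
    have hstep : ∀ (a : FreeGroup α) (g : G),
        (∃ (m : ℕ) (f : FreeGroup α) (k : ℤ), g = I m f * t ^ k) →
        ∃ (m : ℕ) (f : FreeGroup α) (k : ℤ), ι a * g = I m f * t ^ k := by
      rintro a _ ⟨m, f, k, rfl⟩
      obtain ⟨a', ha'⟩ := hImono (Nat.zero_le m) ⟨a, hI0 a⟩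
      exact ⟨m, a' * f, k, by rw [map_mul, ha', mul_assoc]⟩
    induction hg using Subgroup.closure_induction_left with
    | one => exact ⟨0, 1, 0, by simp⟩
    | mul_left x hx q _ ih =>
      rcases hx with ⟨a, rfl⟩ | hx
      · exact hstep a _ ih
      · obtain ⟨m, f, k, rfl⟩ := ih
        rw [Set.mem_singleton_iff.1 hx]
        exact ⟨m, φ f, 1 + k, by rw [← hIconj, zpow_one_add]; group⟩
    | inv_mul_cancel x hx q _ ih =>
      rcases hx with ⟨a, rfl⟩ | hx
      · rw [← map_inv]; exact hstep a⁻¹ _ ih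
      · obtain ⟨m, f, k, rfl⟩ := ih
        rw [Set.mem_singleton_iff.1 hx]
        exact ⟨m + 1, f, -1 + k, by rw [← hIsucc, zpow_add, zpow_neg_one]; group⟩
  have hker : ∀ g, deg g = 1 → ∃ m, g ∈ (I m).range := by
    intro g hg
    obtain ⟨m, f, k, rfl⟩ := hnf g
    rw [map_mul, hIdeg, one_mul, map_zpow, hdt, ← ofAdd_zsmul, ofAdd_eq_one] at hg
    have hk : k = 0 := by simpa using hg
    exact ⟨m, f, by rw [hk, zpow_zero, mul_one]⟩
  have hfin : ∀ S : Set G, S.Finite → (∀ s ∈ S, deg s = 1) → ∃ m, ∀ s ∈ S, s ∈ (I m).range := by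
    intro S hS
    induction S, hS using Set.Finite.induction_on with
    | empty => exact fun _ => ⟨0, by simp⟩
    | @insert a S _ _ ih =>
      intro h
      obtain ⟨m, hm⟩ := ih fun s hs => h s (Or.inr hs)
      obtain ⟨m', hm'⟩ := hker a (h a (Or.inl rfl))
      refine ⟨max m m', ?_⟩
      rintro s (rfl | hs)
      · exact hImono (le_max_right m m') hm'
      · exact hImono (le_max_left m m') (hm s hs)
  have hlift : ∀ (m : ℕ) (S : Set G), S.Finite → (∀ s ∈ S, s ∈ (I m).range) →
      ∃ A₀ : Subgroup (FreeGroup α), A₀.FG ∧ A₀.map (I m) = Subgroup.closure S := by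
    intro m S hS h
    refine ⟨Subgroup.closure (I m ⁻¹' S),
      (Subgroup.fg_iff _).2 ⟨_, rfl, hS.preimage (hIinj m).injOn⟩, ?_⟩
    rw [MonoidHom.map_closure, Set.image_preimage_eq_of_subset h]
  obtain ⟨S, hS, hSfin⟩ := (Subgroup.fg_iff H).1 hH
  have hSH : ∀ s ∈ S, s ∈ H := fun s hs => hS ▸ Subgroup.subset_closure hs
  -- an element of `H` whose degree is non-negative and generates the image of `H`
  obtain ⟨h, hhH, d, hhd, hgen⟩ : ∃ h ∈ H, ∃ d : ℕ, deg h = Multiplicative.ofAdd (d : ℤ) ∧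
      ∀ g ∈ H, ∃ k : ℤ, deg g = deg h ^ k := by
    obtain ⟨⟨_, h, hh, rfl⟩, hgen⟩ := IsCyclic.exists_generator (α := H.map deg)
    have hgen' : ∀ g ∈ H, ∃ k : ℤ, deg g = deg h ^ k := by
      intro g hg
      obtain ⟨k, hk⟩ := hgen ⟨deg g, g, hg, rfl⟩
      exact ⟨k, (congrArg Subtype.val hk).symm⟩
    rcases le_total 0 (Multiplicative.toAdd (deg h)) with h0 | h0
    · obtain ⟨d, hd⟩ := Int.eq_ofNat_of_zero_le h0
      exact ⟨h, hh, d, Multiplicative.toAdd.injective hd, hgen'⟩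
    · obtain ⟨d, hd⟩ := Int.eq_ofNat_of_zero_le (neg_nonneg.2 h0)
      refine ⟨h⁻¹, inv_mem hh, d, Multiplicative.toAdd.injective ?_, fun g hg => ?_⟩
      · rw [map_inv]; exact hd
      · obtain ⟨k, hk⟩ := hgen' g hg
        exact ⟨-k, by rw [hk, map_inv, inv_zpow', neg_neg]⟩
  by_cases hd : deg h = 1
  · obtain ⟨m, hm⟩ := hfin S hSfin fun s hs => by
      obtain ⟨k, hk⟩ := hgen s (hSH s hs)
      rw [hk, hd, one_zpow]
    obtain ⟨A₀, hA₀, hmap⟩ := hlift m S hSfin hm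
    rw [hS] at hmap
    obtain ⟨b, _, ⟨E⟩⟩ := exists_finite_basis A₀ hA₀
    exact Group.IsFinitelyPresented.equiv
      (E.symm.trans ((A₀.equivMapOfInjective (I m) (hIinj m)).trans
        (MulEquiv.subgroupCongr hmap)))
  · choose! n hn using fun s (hs : s ∈ S) => hgen s (hSH s hs)
    let S' : Set G := (fun s => s * (h ^ n s)⁻¹) '' S
    have hS'fin : S'.Finite := hSfin.image _
    obtain ⟨m, hm⟩ := hfin (insert (h * (t ^ d)⁻¹) S') (hS'fin.insert _) (by
      rintro _ (rfl | ⟨s, hs, rfl⟩)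
      · rw [map_mul, map_inv, map_pow, hhd, hdt, ← ofAdd_nsmul, mul_inv_eq_one]
        simp
      · rw [map_mul, map_inv, map_zpow, ← hn s hs, mul_inv_cancel])
    obtain ⟨A₀, hA₀, hmap⟩ := hlift m S' hS'fin fun s hs => hm s (Or.inr hs)
    obtain ⟨c, hc⟩ := hm _ (Or.inl rfl)
    obtain ⟨φd, hφd, htd⟩ : ∃ φd : FreeGroup α →* FreeGroup α, Function.Injective φd ∧
        ∀ f, t ^ d * I m f * (t ^ d)⁻¹ = I m (φd f) := by
      clear hhd hc hm
      induction d with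
      | zero => exact ⟨MonoidHom.id _, fun _ _ h => h, fun f => by simp⟩
      | succ d ih =>
        obtain ⟨φd, h1, h2⟩ := ih
        refine ⟨φ.comp φd, hφ.comp h1, fun f => ?_⟩
        rw [MonoidHom.comp_apply, ← hIconj, ← h2, pow_succ' t, mul_inv_rev]
        simp only [mul_assoc]
    have hψ : Function.Injective ((MulAut.conj c).toMonoidHom.comp φd) :=
      (MulAut.conj c).injective.comp hφd
    have hhψ : ∀ f, h * I m f * h⁻¹ = I m (((MulAut.conj c).toMonoidHom.comp φd) f) := by
      intro f
      have : I m (((MulAut.conj c).toMonoidHom.comp φd) f) =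
          I m c * I m (φd f) * (I m c)⁻¹ := by
        rw [← map_inv, ← map_mul, ← map_mul]; rfl
      rw [this, ← htd, hc]
      group
    have hHeq : A₀.map (I m) ⊔ Subgroup.zpowers h = H := by
      rw [hmap]
      apply le_antisymm
      · refine sup_le ((Subgroup.closure_le _).2 ?_) (Subgroup.zpowers_le.2 hhH)
        rintro _ ⟨s, hs, rfl⟩
        exact mul_mem (hSH s hs) (inv_mem (zpow_mem hhH _))
      · conv_lhs => rw [← hS]
        refine (Subgroup.closure_le _).2 fun s hs => ?_
        have h1 : s = s * (h ^ n s)⁻¹ * h ^ n s := (inv_mul_cancel_right _ _).symm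
        rw [h1]
        exact mul_mem (Subgroup.mem_sup_left (Subgroup.subset_closure ⟨s, hs, rfl⟩))
          (Subgroup.mem_sup_right (Subgroup.zpow_mem_zpowers h _))
    have := finitelyPresented_of_stable_letter (hIinj m) hψ hhψ deg (hIdeg m) hd hA₀
    rwa [hHeq] at this

/-- The universal property of `PresentedGroup (HNNRels n φ)`. -/
theorem exists_hom_of_hnn {n : ℕ} {φ : FreeGroup (Fin n) →* FreeGroup (Fin n)}
    {K : Type} [Group K] (u : FreeGroup (Fin n) →* K) (s : K)
    (hs : ∀ f, s * u f * s⁻¹ = u (φ f)) :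
    ∃ θ : PresentedGroup (HNNRels n φ) →* K,
      (∀ i, θ (PresentedGroup.of (Sum.inl i)) = u (FreeGroup.of i)) ∧
        θ (PresentedGroup.of (Sum.inr ())) = s := by
  have hu : ∀ f, FreeGroup.lift (Sum.elim (fun i => u (FreeGroup.of i)) fun _ : Unit => s)
      (FreeGroup.map Sum.inl f) = u f := by
    intro f
    refine DFunLike.congr_fun (f := (FreeGroup.lift _).comp (FreeGroup.map Sum.inl)) (g := u) ?_ f
    exact FreeGroup.ext_hom _ _ fun i => by simp
  refine ⟨PresentedGroup.toGroup
    (f := Sum.elim (fun i => u (FreeGroup.of i)) fun _ : Unit => s) ?_, fun i => ?_, ?_⟩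
  · rintro _ ⟨i, rfl⟩
    rw [map_mul, map_mul, map_mul, map_inv, map_inv, hu, mul_inv_eq_one, ← hs]
    simp
  · rw [PresentedGroup.toGroup.of]; rfl
  · rw [PresentedGroup.toGroup.of]; rfl

/-- (Feighn–Handel) For every `n ≥ 1` and every injective endomorphism `φ` of the
free group `Fₙ`, the ascending HNN extension `HNN_φ(Fₙ)` is coherent: every
finitely generated subgroup is finitely presented. -/
theorem hnn_of_free_group_coherent (n : ℕ) (hn : 1 ≤ n)
    (φ : FreeGroup (Fin n) →* FreeGroup (Fin n)) (hφ : Function.Injective φ)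
    (H : Subgroup (PresentedGroup (HNNRels n φ))) (hH : H.FG) :
    FinitelyPresentedGroup H := by
  let G := PresentedGroup (HNNRels n φ)
  let t : G := PresentedGroup.of (Sum.inr ())
  let ι : FreeGroup (Fin n) →* G := FreeGroup.lift fun i => PresentedGroup.of (Sum.inl i)
  have hιi : ∀ i, ι (FreeGroup.of i) = PresentedGroup.of (Sum.inl i) :=
    fun i => FreeGroup.lift_apply_of
  have hιmk : ∀ f, ι f = PresentedGroup.mk (HNNRels n φ) (FreeGroup.map Sum.inl f) := by
    intro f
    refine DFunLike.congr_fun (f := ι)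
      (g := (PresentedGroup.mk (HNNRels n φ)).comp (FreeGroup.map Sum.inl)) ?_ f
    refine FreeGroup.ext_hom _ _ fun i => ?_
    rw [hιi, MonoidHom.comp_apply, FreeGroup.map.of]; rfl
  have ht : ∀ f, t * ι f * t⁻¹ = ι (φ f) := by
    intro f
    refine DFunLike.congr_fun (f := (MulAut.conj t).toMonoidHom.comp ι) (g := ι.comp φ) ?_ f
    refine FreeGroup.ext_hom _ _ fun i => ?_
    change t * ι (FreeGroup.of i) * t⁻¹ = ι (φ (FreeGroup.of i))
    rw [hιi, hιmk, ← mul_inv_eq_one]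
    exact PresentedGroup.one_of_mem (rels := HNNRels n φ) ⟨i, rfl⟩
  have hι : Function.Injective ι := by
    -- the base group embeds by Britton's lemma for the HNN extension with associated subgroups
    -- `⊤` and `φ.range`
    let E : (⊤ : Subgroup (FreeGroup (Fin n))) ≃* φ.range :=
      Subgroup.topEquiv.trans (MonoidHom.ofInjective hφ)
    obtain ⟨θ, hθ, -⟩ := exists_hom_of_hnn (φ := φ)
      (HNNExtension.of (A := ⊤) (B := φ.range) (φ := E)) HNNExtension.t
      fun f => (HNNExtension.equiv_eq_conj (φ := E) ⟨f, Subgroup.mem_top f⟩).symm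
    have hθι : θ.comp ι = HNNExtension.of := FreeGroup.ext_hom _ _ fun i => by
      rw [MonoidHom.comp_apply, hιi, hθ]
    refine Function.Injective.of_comp (f := θ) ?_
    rw [← MonoidHom.coe_comp, hθι]
    exact HNNExtension.of_injective _
  obtain ⟨deg, hdegi, hdegt⟩ := exists_hom_of_hnn (φ := φ)
    (1 : FreeGroup (Fin n) →* Multiplicative ℤ) (Multiplicative.ofAdd 1) fun f => by simp
  have hdι : ∀ f, deg (ι f) = 1 := by
    intro f
    refine DFunLike.congr_fun (f := deg.comp ι) (g := 1) ?_ f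
    exact FreeGroup.ext_hom _ _ fun i => by rw [MonoidHom.comp_apply, hιi, hdegi]
  have htop : Subgroup.closure (Set.range ι ∪ {t}) = ⊤ := by
    rw [eq_top_iff]
    rintro g -
    refine PresentedGroup.generated_by _ _ ?_ g
    rintro (i | ⟨⟩)
    · exact Subgroup.subset_closure (Or.inl ⟨FreeGroup.of i, hιi i⟩)
    · exact Subgroup.subset_closure (Or.inr rfl)
  have hfp : Group.IsFinitelyPresented H :=
    isFinitelyPresented_of_ascending hι hφ ht deg hdι hdegt htop H hH
  obtain ⟨k, s, hs, ⟨e⟩⟩ := Group.IsFinitelyPresented.exists_mulEquiv_presentedGroup (G := H)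
  exact ⟨Fin k, inferInstance, s, hs, ⟨e⟩⟩
end

section
/- The group G = ⟨x, y, t ∣ t x t⁻¹ = x², t y t⁻¹ = y²⟩ is not linear: for every field k and every positive integer n, there is no injective group homomorphism from G into GL_n(k). -/
/-!
Let `ψ` be a representation of `G`; enlarge the field so that it is algebraically closed. As `x` is
conjugate to `x ^ 2`, the eigenvalues of `ψ x` are closed under squaring, hence roots of unity, so
some power `ψ x ^ a` is unipotent, and likewise some `ψ y ^ b` (`exists_pow_unipotent`).

In positive characteristic a unipotent matrix has finite order. In characteristic zero, let `T` be
conjugation by `ψ t` on the matrix algebra, and let `weightGE T d` be the span of its eigenvectors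
with eigenvalue `2 ^ i`, `i ≥ d`. These spans form a multiplicative filtration which vanishes for
large `d`, since there are only finitely many eigenvalues. A unipotent `u` with `T u = u ^ 2`
satisfies `u - 1 ∈ weightGE T 1` (`sub_one_mem_weightGE`; in terms of `log u`, this says that
`T (log u) = 2 log u`). Hence a commutator of `d` such elements is congruent to 1 modulo
`weightGE T d`, and long iterated commutators of `ψ x ^ a` and `ψ y ^ b` are trivial
(`exists_iterComm_eq_one`). In all characteristics some iterated commutator of positive powers of
`ψ x` and `ψ y` is therefore trivial (`exists_iterComm_pow_eq_one`).

In `G` no such commutator is trivial (`iterComm_pow_ne_one`): `x` and `y` generate a free group,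
since `G` maps to the HNN extension of the free group along squaring, whose base group embeds by
normal forms; positive powers of free generators again freely generate; and a free group of rank 2
maps onto the dihedral group of order 6, which is not nilpotent.
-/

/-- Generators of the group `G = ⟨x, y, t ∣ t x t⁻¹ = x², t y t⁻¹ = y²⟩`. -/
inductive DSGen : Type
  | x : DSGen
  | y : DSGen
  | t : DSGen

/-- The relators `t x t⁻¹ x⁻²` and `t y t⁻¹ y⁻²` of the group
`G = ⟨x, y, t ∣ t x t⁻¹ = x², t y t⁻¹ = y²⟩`. -/
def DSRels : Set (FreeGroup DSGen) :=
  {FreeGroup.of DSGen.t * FreeGroup.of DSGen.x * (FreeGroup.of DSGen.t)⁻¹ *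
      (FreeGroup.of DSGen.x ^ 2)⁻¹,
   FreeGroup.of DSGen.t * FreeGroup.of DSGen.y * (FreeGroup.of DSGen.t)⁻¹ *
      (FreeGroup.of DSGen.y ^ 2)⁻¹}

/-! ### Iterated commutators -/

open scoped commutatorElement

/-- The left-normed iterated commutator `⁅…⁅⁅a, b⁆, b⁆, …, b⁆` with `d` occurrences of `b`. -/
def iterComm {G : Type*} [Group G] (a b : G) : ℕ → G
  | 0 => a
  | d + 1 => ⁅iterComm a b d, b⁆

theorem map_iterComm {G H : Type*} [Group G] [Group H] (f : G →* H) (a b : G) (d : ℕ) :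
    f (iterComm a b d) = iterComm (f a) (f b) d := by
  induction d with
  | zero => rfl
  | succ d ih => simp only [iterComm, map_commutatorElement, ih]

/-- In the dihedral group of order 6, commutation with a reflection squares a rotation, so the
iterated commutators of a rotation with a reflection never die out. -/
theorem iterComm_dihedral (d : ℕ) :
    iterComm (DihedralGroup.r 1 : DihedralGroup 3) (DihedralGroup.sr 0) d ≠ 1 := by
  have key : iterComm (DihedralGroup.r 1 : DihedralGroup 3) (DihedralGroup.sr 0) d =
        DihedralGroup.r 1 ∨
      iterComm (DihedralGroup.r 1 : DihedralGroup 3) (DihedralGroup.sr 0) d =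
        DihedralGroup.r 2 := by
    induction d with
    | zero => exact Or.inl rfl
    | succ d ih =>
      rcases ih with h | h
      · right; rw [iterComm, h]; decide
      · left; rw [iterComm, h]; decide
  rcases key with h | h <;> rw [h] <;> decide

theorem iterComm_freeGroup (d : ℕ) :
    iterComm (FreeGroup.of true) (FreeGroup.of false) d ≠ 1 := by
  intro h
  have := congrArg (FreeGroup.lift fun i : Bool =>
    if i then (DihedralGroup.r 1 : DihedralGroup 3) else DihedralGroup.sr 0) h
  rw [map_iterComm, map_one] at this
  exact iterComm_dihedral d (by simpa using this)

/-! ### Powers of free generators -/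

/-- The endomorphism of a free group raising each generator `i` to the power `f i`. -/
def powEnd {α : Type*} (f : α → ℕ) : FreeGroup α →* FreeGroup α :=
  FreeGroup.lift fun i => FreeGroup.of i ^ f i

theorem powEnd_of {α : Type*} (f : α → ℕ) (i : α) :
    powEnd f (FreeGroup.of i) = FreeGroup.of i ^ f i := by
  simp [powEnd]

theorem mk_replicate {α : Type*} (i : α) (b : Bool) (m : ℕ) :
    FreeGroup.mk (List.replicate m (i, b)) = FreeGroup.mk [(i, b)] ^ m := by
  induction m with
  | zero => rfl
  | succ m ih => rw [pow_succ', ← ih, FreeGroup.mul_mk]; rfl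

theorem powEnd_mk {α : Type*} (f : α → ℕ) (L : List (α × Bool)) :
    powEnd f (FreeGroup.mk L) =
      FreeGroup.mk (L.flatMap fun a => List.replicate (f a.1) a) := by
  induction L with
  | nil => exact map_one _
  | cons a L ih =>
    have h : FreeGroup.mk (a :: L) = FreeGroup.mk [a] * FreeGroup.mk L := by
      rw [FreeGroup.mul_mk]; rfl
    rw [h, map_mul, ih, List.flatMap_cons, ← FreeGroup.mul_mk]
    congr 1
    obtain ⟨i, b⟩ := a
    rw [mk_replicate]
    cases b
    · have h' : FreeGroup.mk [(i, false)] = (FreeGroup.of i)⁻¹ := rfl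
      rw [h', map_inv, powEnd_of, inv_pow]
    · exact powEnd_of f i

theorem isReduced_flatMap_replicate {α : Type*} (f : α → ℕ) (hf : ∀ i, 0 < f i)
    (L : List (α × Bool)) (hL : FreeGroup.IsReduced L) :
    FreeGroup.IsReduced (L.flatMap fun a => List.replicate (f a.1) a) := by
  induction L with
  | nil => exact hL
  | cons a L ih =>
    rw [List.flatMap_cons, FreeGroup.IsReduced, List.isChain_append]
    refine ⟨List.isChain_replicate_of_rel _ fun _ => rfl,
      ih (List.IsChain.tail hL), ?_⟩
    intro x hx y hy
    obtain rfl : x = a := List.eq_of_mem_replicate (List.mem_of_mem_getLast? hx)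
    cases L with
    | nil => simp at hy
    | cons b L =>
      obtain ⟨m, hm⟩ := Nat.exists_eq_succ_of_ne_zero (hf b.1).ne'
      obtain rfl : b = y := by simpa [hm, List.replicate_succ] using hy
      exact (FreeGroup.isReduced_cons_cons.1 hL).1

/-- Replacing every letter of a reduced word by a positive power of itself gives a reduced word,
so no nontrivial element is killed. -/
theorem powEnd_injective {α : Type*} (f : α → ℕ) (hf : ∀ i, 0 < f i) :
    Function.Injective (powEnd f) := by
  classical
  rw [injective_iff_map_eq_one]
  intro w hw
  rw [← FreeGroup.mk_toWord (x := w), powEnd_mk] at hw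
  have hr := isReduced_flatMap_replicate f hf _ (FreeGroup.isReduced_toWord (x := w))
  have h0 := congrArg FreeGroup.toWord hw
  rw [FreeGroup.toWord_mk, hr.reduce_eq, FreeGroup.toWord_one, List.flatMap_eq_nil_iff] at h0
  rw [← FreeGroup.toWord_eq_nil_iff, List.eq_nil_iff_forall_not_mem]
  intro a ha
  have := h0 a ha
  rw [List.replicate_eq_nil_iff] at this
  exact (hf a.1).ne' this

/-! ### Embedding the free group in `G` -/

/-- The endomorphism squaring each generator, as an isomorphism from the whole free group to its
image: the gluing isomorphism of the HNN extension. -/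
noncomputable def sqIso : (⊤ : Subgroup (FreeGroup Bool)) ≃* (powEnd fun _ : Bool => 2).range :=
  Subgroup.topEquiv.trans (MonoidHom.ofInjective (powEnd_injective _ fun _ => two_pos))

theorem hnn_rel (i : Bool) :
    (HNNExtension.t * HNNExtension.of (FreeGroup.of i) * HNNExtension.t⁻¹ :
      HNNExtension (FreeGroup Bool) _ _ sqIso) = HNNExtension.of (FreeGroup.of i) ^ 2 := by
  have h := HNNExtension.equiv_eq_conj (φ := sqIso) ⟨FreeGroup.of i, Subgroup.mem_top _⟩
  rw [← h, ← map_pow, ← powEnd_of fun _ => 2]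
  rfl

/-- The homomorphism from `G` to the HNN extension sending `x` and `y` to the generators of the base
group and `t` to the stable letter. -/
noncomputable def toHNN :
    PresentedGroup DSRels →* HNNExtension (FreeGroup Bool) _ _ sqIso :=
  PresentedGroup.toGroup (f := fun g => match g with
    | DSGen.x => HNNExtension.of (FreeGroup.of true)
    | DSGen.y => HNNExtension.of (FreeGroup.of false)
    | DSGen.t => HNNExtension.t) <| by
    rintro r (rfl | rfl) <;>
    simp only [map_mul, map_inv, map_pow, FreeGroup.lift_apply_of, hnn_rel, mul_inv_cancel]

/-- Positive powers of `x` and `y` generate a free group, in which no iterated commutator of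
the two generators is trivial. -/
theorem iterComm_pow_ne_one (a b : ℕ) (ha : 0 < a) (hb : 0 < b) (d : ℕ) :
    iterComm ((PresentedGroup.of DSGen.x : PresentedGroup DSRels) ^ a)
      (PresentedGroup.of DSGen.y ^ b) d ≠ 1 := by
  intro h
  have h1 := congrArg toHNN h
  rw [map_iterComm, map_one, map_pow, map_pow, toHNN, PresentedGroup.toGroup.of,
    PresentedGroup.toGroup.of, ← map_pow, ← map_pow, ← map_iterComm] at h1
  have h2 := HNNExtension.of_injective sqIso (h1.trans (map_one _).symm)
  have h3 : powEnd (fun i => if i then a else b)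
      (iterComm (FreeGroup.of true) (FreeGroup.of false) d) = 1 := by
    rw [map_iterComm, powEnd_of, powEnd_of]
    exact h2
  refine iterComm_freeGroup d (powEnd_injective _ ?_ (h3.trans (map_one _).symm))
  intro i
  cases i
  · exact hb
  · exact ha

theorem ds_rel_x : (PresentedGroup.of DSGen.t : PresentedGroup DSRels) * PresentedGroup.of DSGen.x
    * (PresentedGroup.of DSGen.t)⁻¹ = PresentedGroup.of DSGen.x ^ 2 :=
  mul_inv_eq_one.1 (PresentedGroup.one_of_mem (rels := DSRels) (Or.inl rfl))

theorem ds_rel_y : (PresentedGroup.of DSGen.t : PresentedGroup DSRels) * PresentedGroup.of DSGen.y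
    * (PresentedGroup.of DSGen.t)⁻¹ = PresentedGroup.of DSGen.y ^ 2 :=
  mul_inv_eq_one.1 (PresentedGroup.one_of_mem (rels := DSRels) (Or.inr rfl))

/-! ### The filtration by weights -/

section Weights

variable {K A : Type*} [Field K] [Ring A] [Algebra K A] (T : A →ₐ[K] A)

/-- The span of the eigenvectors of `T` with eigenvalue `2 ^ i` for some `i ≥ d`. -/
def weightGE (d : ℕ) : Submodule K A :=
  Submodule.span K {a | ∃ i, d ≤ i ∧ T a = (2 : K) ^ i • a}

theorem weightGE_anti {d e : ℕ} (h : d ≤ e) : weightGE T e ≤ weightGE T d :=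
  Submodule.span_mono fun _ ⟨i, hi, ha⟩ => ⟨i, h.trans hi, ha⟩

theorem mul_mem_weightGE {d e : ℕ} {a b : A} (ha : a ∈ weightGE T d) (hb : b ∈ weightGE T e) :
    a * b ∈ weightGE T (d + e) := by
  have h : a * b ∈ weightGE T d * weightGE T e := Submodule.mul_mem_mul ha hb
  rw [weightGE, weightGE, Submodule.span_mul_span] at h
  refine Submodule.span_mono ?_ h
  rintro _ ⟨a, ⟨i, hi, ha⟩, b, ⟨j, hj, hb⟩, rfl⟩
  refine ⟨i + j, add_le_add hi hj, ?_⟩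
  rw [map_mul, ha, hb, smul_mul_assoc, mul_smul_comm, smul_smul, pow_add]

theorem mul_one_add_mem {d : ℕ} {z w : A} (hz : z ∈ weightGE T d) (hw : w - 1 ∈ weightGE T 1) :
    z * w ∈ weightGE T d := by
  have h : z * w = z + z * (w - 1) := by rw [mul_sub, mul_one, add_sub_cancel]
  have h' : z * (w - 1) ∈ weightGE T (d + 1) := mul_mem_weightGE T hz hw
  rw [h]
  exact add_mem hz (weightGE_anti T (Nat.le_succ d) h')

theorem two_pow_injective [CharZero K] : Function.Injective fun i : ℕ => (2 : K) ^ i := by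
  intro i j h
  have h' : ((2 ^ i : ℕ) : K) = ((2 ^ j : ℕ) : K) := by push_cast; exact h
  exact Nat.pow_right_injective le_rfl (Nat.cast_injective h')

/-- An endomorphism of a finite-dimensional space has finitely many eigenvalues, while the
powers of 2 are distinct in characteristic zero. -/
theorem exists_weightGE_eq_bot [CharZero K] [FiniteDimensional K A] :
    ∃ D, weightGE T D = ⊥ := by
  have hfin : Set.Finite {i : ℕ | Module.End.HasEigenvalue (T.toLinearMap : Module.End K A)
      ((2 : K) ^ i)} :=
    (Module.End.finite_hasEigenvalue _).preimage two_pow_injective.injOn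
  obtain ⟨D, hD⟩ := hfin.bddAbove
  refine ⟨D + 1, ?_⟩
  rw [weightGE, Submodule.span_eq_bot]
  rintro a ⟨i, hi, ha⟩
  by_contra h0
  have := hD (Module.End.hasEigenvalue_of_hasEigenvector
    (f := T.toLinearMap) ⟨Module.End.mem_eigenspace_iff.2 ha, h0⟩)
  omega

/-- `T - 2 ^ j` acts on the eigenvectors of weight `i > j` by the nonzero scalar
`2 ^ i - 2 ^ j`, so it is surjective on their span. -/
theorem exists_sub_smul_eq [CharZero K] (j : ℕ) {z : A} (hz : z ∈ weightGE T (j + 1)) :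
    ∃ w ∈ weightGE T (j + 1), T w - (2 : K) ^ j • w = z := by
  rw [weightGE] at hz
  induction hz using Submodule.span_induction with
  | mem a ha =>
    obtain ⟨i, hi, hTa⟩ := ha
    have hne : (2 : K) ^ i - 2 ^ j ≠ 0 :=
      sub_ne_zero.2 fun h => by have := two_pow_injective h; omega
    refine ⟨((2 : K) ^ i - 2 ^ j)⁻¹ • a,
      Submodule.smul_mem _ _ (Submodule.subset_span ⟨i, hi, hTa⟩), ?_⟩
    rw [map_smul, hTa, smul_comm ((2 : K) ^ j), ← smul_sub, ← sub_smul, smul_smul,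
      inv_mul_cancel₀ hne, one_smul]
  | zero => exact ⟨0, zero_mem _, by simp⟩
  | add a b _ _ iha ihb =>
    obtain ⟨v, hv, rfl⟩ := iha
    obtain ⟨w, hw, rfl⟩ := ihb
    refine ⟨v + w, add_mem hv hw, ?_⟩
    rw [map_add, smul_add]; abel
  | smul c a _ iha =>
    obtain ⟨v, hv, rfl⟩ := iha
    refine ⟨c • v, Submodule.smul_mem _ _ hv, ?_⟩
    rw [map_smul, smul_sub, smul_comm]

open Polynomial in
/-- If `T u = u ^ 2` and `e = u - 1` is nilpotent, then `T e = 2 e + e ^ 2`, so `T` acts on the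
span of `e ^ j, e ^ (j + 1), …` triangularly with diagonal entries `2 ^ j, 2 ^ (j + 1), …`.
These being distinct, the span consists of sums of eigenvectors. -/
theorem pow_mul_aeval_mem [CharZero K] {e : A} (hT : T e = 2 * e + e ^ 2) {k : ℕ}
    (hk : e ^ k = 0) (m : ℕ) :
    ∀ (j : ℕ) (p : K[X]), k ≤ j + m → e ^ j * aeval e p ∈ weightGE T j := by
  induction m with
  | zero =>
    intro j p hj
    rw [pow_eq_zero_of_le (show k ≤ j from hj) hk, zero_mul]
    exact zero_mem _
  | succ m ih =>
    intro j p hj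
    -- `(T - 2 ^ j)` maps `e ^ j p(e)` to `e ^ j r(e)`, where `r` has no constant term.
    obtain ⟨q, hq⟩ : (X : K[X]) ∣ (2 + X) ^ j * p.comp (2 * X + X ^ 2) - C (2 ^ j) * p := by
      rw [X_dvd_iff, coeff_zero_eq_eval_zero]
      simp [eval_comp]
    have hTe : T e = aeval e (2 * X + X ^ 2 : K[X]) := by
      simp only [hT, map_add, map_mul, map_pow, aeval_X, map_ofNat]
    have hTp : T (aeval e p) = aeval e (p.comp (2 * X + X ^ 2)) := by
      rw [aeval_comp, ← hTe, aeval_algHom_apply]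
    have hpow : T e ^ j = e ^ j * aeval e ((2 + X) ^ j : K[X]) := by
      have h : (2 * X + X ^ 2 : K[X]) ^ j = X ^ j * (2 + X) ^ j := by
        rw [← mul_pow]; ring
      rw [hTe, ← map_pow, h, map_mul, map_pow, aeval_X]
    have hstep : T (e ^ j * aeval e p) - (2 : K) ^ j • (e ^ j * aeval e p) =
        e ^ (j + 1) * aeval e q := by
      have h := congrArg (aeval e) hq
      rw [map_sub, map_mul, map_mul, map_mul, aeval_X, aeval_C, ← Algebra.smul_def] at h
      rw [pow_succ, mul_assoc, ← h, mul_sub, map_mul, map_pow, hpow, hTp, mul_assoc, mul_smul_comm]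
    obtain ⟨w, hw, hw'⟩ := exists_sub_smul_eq T j (ih (j + 1) q (by omega))
    have hdiff : e ^ j * aeval e p - w ∈ weightGE T j := by
      refine Submodule.subset_span ⟨j, le_rfl, ?_⟩
      rw [← hstep] at hw'
      rw [map_sub, smul_sub, ← sub_eq_zero, ← sub_eq_zero.2 hw'.symm]
      abel
    have := add_mem hdiff (weightGE_anti T (Nat.le_succ j) hw)
    rwa [sub_add_cancel] at this

theorem sub_one_mem_weightGE [CharZero K] {u : A} (hT : T u = u ^ 2) (hu : IsNilpotent (u - 1)) :
    u - 1 ∈ weightGE T 1 := by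
  obtain ⟨k, hk⟩ := hu
  have := pow_mul_aeval_mem T (e := u - 1) (by rw [map_sub, hT, map_one]; noncomm_ring) hk k 1 1
    (by omega)
  simpa using this

/-- The units `u` for which both `u` and `u⁻¹` are congruent to 1 modulo weights at least `d`. -/
def NearOne (d : ℕ) (u : Aˣ) : Prop :=
  (u : A) - 1 ∈ weightGE T d ∧ ((u⁻¹ : Aˣ) : A) - 1 ∈ weightGE T d

theorem commutator_sub_one_mem {d e : ℕ} (hd : 1 ≤ d) (he : 1 ≤ e) {u v : Aˣ}
    (hu : NearOne T d u) (hv : NearOne T e v) :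
    ((⁅u, v⁆ : Aˣ) : A) - 1 ∈ weightGE T (d + e) := by
  have h : ((⁅u, v⁆ : Aˣ) : A) - 1 = (((u : A) - 1) * ((v : A) - 1) -
      ((v : A) - 1) * ((u : A) - 1)) * ((u⁻¹ : Aˣ) : A) * ((v⁻¹ : Aˣ) : A) := by
    have h1 : ((u : A) - 1) * ((v : A) - 1) - ((v : A) - 1) * ((u : A) - 1) = u * v - v * u := by
      noncomm_ring
    have h2 : (v : A) * u * ((u⁻¹ : Aˣ) : A) * ((v⁻¹ : Aˣ) : A) = 1 := by
      rw [Units.mul_inv_cancel_right, Units.mul_inv]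
    rw [h1, sub_mul, sub_mul, h2, commutatorElement_def]
    simp only [Units.val_mul]
  rw [h]
  refine mul_one_add_mem T (mul_one_add_mem T (sub_mem (mul_mem_weightGE T hu.1 hv.1) ?_)
    (weightGE_anti T hd hu.2)) (weightGE_anti T he hv.2)
  rw [add_comm]
  exact mul_mem_weightGE T hv.1 hu.1

theorem NearOne.commutator {d e : ℕ} (hd : 1 ≤ d) (he : 1 ≤ e) {u v : Aˣ}
    (hu : NearOne T d u) (hv : NearOne T e v) : NearOne T (d + e) ⁅u, v⁆ := by
  refine ⟨commutator_sub_one_mem T hd he hu hv, ?_⟩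
  rw [commutatorElement_inv, add_comm]
  exact commutator_sub_one_mem T he hd hv hu

/-- The number of factors, and with it the weight, grows by one with each commutation. -/
theorem NearOne.iterComm {u v : Aˣ} (hu : NearOne T 1 u) (hv : NearOne T 1 v) (d : ℕ) :
    NearOne T (d + 1) (iterComm u v d) := by
  induction d with
  | zero => exact hu
  | succ d ih => exact ih.commutator T (Nat.le_add_left 1 d) le_rfl hv

theorem nearOne_of_isNilpotent [CharZero K] {u : Aˣ} (hT : T u = (u : A) ^ 2)
    (hu : IsNilpotent ((u : A) - 1)) : NearOne T 1 u := by
  refine ⟨sub_one_mem_weightGE T hT hu, sub_one_mem_weightGE T ?_ ?_⟩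
  · have h1 : (u : A) ^ 2 * T ((u⁻¹ : Aˣ) : A) = 1 := by
      rw [← hT, ← map_mul, Units.mul_inv, map_one]
    have h2 : (u : A) ^ 2 * ((u⁻¹ : Aˣ) : A) ^ 2 = 1 := by
      rw [← Units.val_pow_eq_pow_val, ← Units.val_pow_eq_pow_val, ← Units.val_mul, inv_pow,
        mul_inv_cancel, Units.val_one]
    exact (u ^ 2).isUnit.mul_left_cancel (by rw [Units.val_pow_eq_pow_val, h1, h2])
  · have h : ((u⁻¹ : Aˣ) : A) - 1 = -(((u⁻¹ : Aˣ) : A) * ((u : A) - 1)) := by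
      rw [mul_sub, Units.inv_mul, mul_one, neg_sub]
    have hc : Commute ((u⁻¹ : Aˣ) : A) ((u : A) - 1) := by
      rw [Commute, SemiconjBy, mul_sub, sub_mul, Units.inv_mul, Units.mul_inv, mul_one, one_mul]
    rw [h]
    exact (hc.isNilpotent_mul_left hu).neg

/-- Iterated commutators become congruent to 1 modulo the zero subspace. -/
theorem exists_iterComm_eq_one [CharZero K] [FiniteDimensional K A] {u v : Aˣ}
    (hTu : T u = (u : A) ^ 2) (hTv : T v = (v : A) ^ 2)
    (hu : IsNilpotent ((u : A) - 1)) (hv : IsNilpotent ((v : A) - 1)) :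
    ∃ d, iterComm u v d = 1 := by
  obtain ⟨D, hD⟩ := exists_weightGE_eq_bot T
  refine ⟨D, Units.ext ?_⟩
  have h := weightGE_anti T (Nat.le_succ D) ((nearOne_of_isNilpotent T hTu hu).iterComm T
    (nearOne_of_isNilpotent T hTv hv) D).1
  rw [hD, Submodule.mem_bot, sub_eq_zero] at h
  exact h

end Weights

/-! ### Matrices conjugate to their squares -/

section Matrices

variable {K : Type*} [Field K] [IsAlgClosed K] {n : ℕ}

open Polynomial in
/-- By Cayley–Hamilton: the characteristic polynomial, a product of factors `X - μ`, divides a power of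
`X ^ N - 1`. -/
theorem isNilpotent_pow_sub_one (M : Matrix (Fin n) (Fin n) K) (N : ℕ)
    (h : ∀ μ ∈ spectrum K M, μ ^ N = 1) : IsNilpotent (M ^ N - 1) := by
  have hprod := (IsAlgClosed.splits M.charpoly).eq_prod_roots_of_monic M.charpoly_monic
  have hdvd : M.charpoly ∣ (X ^ N - 1) ^ M.charpoly.roots.card := by
    have h1 : (M.charpoly.roots.map fun r => X - C r).prod ∣
        (M.charpoly.roots.map fun _ => (X ^ N - 1 : K[X])).prod := by
      refine Multiset.prod_dvd_prod_of_dvd _ _ fun r hr => ?_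
      rw [dvd_iff_isRoot]
      have hr' := h r (Matrix.mem_spectrum_iff_isRoot_charpoly.2 (isRoot_of_mem_roots hr))
      simp [hr']
    rw [← hprod] at h1
    simpa using h1
  refine ⟨M.charpoly.roots.card, ?_⟩
  obtain ⟨q, hq⟩ := hdvd
  have h2 := congrArg (aeval M) hq
  rw [map_mul, Matrix.aeval_self_charpoly, zero_mul] at h2
  simpa using h2

/-- The spectrum of a matrix conjugate to its square is a finite set of nonzero scalars stable
under squaring, so it consists of roots of unity. -/
theorem exists_pow_unipotent (u t : (Matrix (Fin n) (Fin n) K)ˣ) (h : t * u * t⁻¹ = u ^ 2) :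
    ∃ N, 0 < N ∧ IsNilpotent (((u ^ N : (Matrix (Fin n) (Fin n) K)ˣ) :
      Matrix (Fin n) (Fin n) K) - 1) := by
  set S := spectrum K (u : Matrix (Fin n) (Fin n) K) with hS
  have hfin : S.Finite := Matrix.finite_spectrum _
  have hsq : ∀ μ ∈ S, μ ^ 2 ∈ S := by
    intro μ hμ
    have h1 : spectrum K ((u : Matrix (Fin n) (Fin n) K) ^ 2) = S := by
      rw [← Units.val_pow_eq_pow_val, ← h, Units.val_mul, Units.val_mul, spectrum.units_conjugate]
    rw [← h1, spectrum.map_pow_of_pos _ two_pos]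
    exact ⟨μ, hμ, rfl⟩
  have hit : ∀ μ ∈ S, ∀ i : ℕ, μ ^ 2 ^ i ∈ S := by
    intro μ hμ i
    induction i with
    | zero => simpa using hμ
    | succ i ih => rw [pow_succ, pow_mul]; exact hsq _ ih
  have hroot : ∀ μ ∈ S, ∃ m, 0 < m ∧ μ ^ m = 1 := by
    intro μ hμ
    have h0 : μ ≠ 0 := by
      rintro rfl
      exact spectrum.zero_notMem K u.isUnit hμ
    obtain ⟨i, -, j, -, hij, hEq⟩ := Set.infinite_univ.exists_lt_map_eq_of_mapsTo
      (f := fun i : ℕ => μ ^ 2 ^ i) (t := S) (fun i _ => hit μ hμ i) hfin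
    have hlt : 2 ^ i < 2 ^ j := Nat.pow_lt_pow_right one_lt_two hij
    refine ⟨2 ^ j - 2 ^ i, Nat.sub_pos_of_lt hlt, ?_⟩
    rw [pow_sub₀ _ h0 hlt.le, ← hEq, mul_inv_cancel₀ (pow_ne_zero _ h0)]
  choose! m hm0 hm1 using hroot
  refine ⟨∏ μ ∈ hfin.toFinset, m μ,
    Finset.prod_pos fun μ hμ => hm0 μ (hfin.mem_toFinset.1 hμ), ?_⟩
  rw [Units.val_pow_eq_pow_val]
  refine isNilpotent_pow_sub_one _ _ fun μ hμ => ?_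
  obtain ⟨c, hc⟩ := Finset.dvd_prod_of_mem m (hfin.mem_toFinset.2 hμ)
  rw [hc, pow_mul, hm1 μ hμ, one_pow]

/-- In characteristic zero the powers produced by `exists_pow_unipotent` generate a nilpotent
group; in positive characteristic a unipotent matrix has finite order. -/
theorem exists_iterComm_pow_eq_one [NeZero n] (x y t : (Matrix (Fin n) (Fin n) K)ˣ)
    (hx : t * x * t⁻¹ = x ^ 2) (hy : t * y * t⁻¹ = y ^ 2) :
    ∃ a b d, 0 < a ∧ 0 < b ∧ iterComm (x ^ a) (y ^ b) d = 1 := by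
  obtain ⟨a, ha, hxa⟩ := exists_pow_unipotent x t hx
  obtain ⟨b, hb, hyb⟩ := exists_pow_unipotent y t hy
  obtain ⟨p, hp⟩ := CharP.exists K
  rcases CharP.char_is_prime_or_zero K p with hprime | rfl
  · have : Fact p.Prime := ⟨hprime⟩
    obtain ⟨k, hk⟩ := hxa
    refine ⟨a * p ^ k, 1, 0, Nat.mul_pos ha (pow_pos hprime.pos k), one_pos, Units.ext ?_⟩
    have h := pow_eq_zero_of_le (Nat.lt_pow_self hprime.one_lt (n := k)).le hk
    rw [sub_pow_char_pow_of_commute _ _ (Commute.one_right _), one_pow, sub_eq_zero] at h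
    rw [iterComm, pow_mul, Units.val_pow_eq_pow_val, h, Units.val_one]
  · have : CharZero K := CharP.charP_to_charZero K
    let T : Matrix (Fin n) (Fin n) K →ₐ[K] Matrix (Fin n) (Fin n) K :=
      (MulSemiringAction.toAlgHom K (Matrix (Fin n) (Fin n) K) (ConjAct.toConjAct t))
    have hT : ∀ (z : (Matrix (Fin n) (Fin n) K)ˣ) (c : ℕ), t * z * t⁻¹ = z ^ 2 →
        T ((z ^ c : (Matrix (Fin n) (Fin n) K)ˣ) : Matrix (Fin n) (Fin n) K) =
          ((z ^ c : (Matrix (Fin n) (Fin n) K)ˣ) : Matrix (Fin n) (Fin n) K) ^ 2 := by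
      intro z c hz
      have h : t * z ^ c * t⁻¹ = (z ^ c) ^ 2 := by
        rw [← conj_pow, hz, pow_right_comm]
      rw [← Units.val_pow_eq_pow_val, ← h]
      rfl
    obtain ⟨d, hd⟩ := exists_iterComm_eq_one T (hT x a hx) (hT y b hy) hxa hyb
    exact ⟨a, b, d, ha, hb, hd⟩

end Matrices

/-! ### The group is not linear -/

/-- (Druţu–Sapir) The group `G = ⟨x, y, t ∣ t x t⁻¹ = x², t y t⁻¹ = y²⟩` is not
linear: it has no faithful finite-dimensional representation over any field. -/
theorem ds_group_not_linear (k : Type*) [Field k] (n : ℕ) (hn : 0 < n)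
    (ψ : PresentedGroup DSRels →* Matrix.GeneralLinearGroup (Fin n) k) :
    ¬ Function.Injective ψ := by
  intro hψ
  have : NeZero n := ⟨hn.ne'⟩
  let ι : Matrix.GeneralLinearGroup (Fin n) k →*
      Matrix.GeneralLinearGroup (Fin n) (AlgebraicClosure k) :=
    Matrix.GeneralLinearGroup.map (algebraMap k (AlgebraicClosure k))
  have hι : Function.Injective ι :=
    Units.map_injective (Matrix.map_injective (algebraMap k (AlgebraicClosure k)).injective)
  let ρ := ι.comp ψ
  have hρ : Function.Injective ρ := hι.comp hψ
  obtain ⟨a, b, d, ha, hb, h⟩ := exists_iterComm_pow_eq_one (ρ (PresentedGroup.of DSGen.x))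
    (ρ (PresentedGroup.of DSGen.y)) (ρ (PresentedGroup.of DSGen.t))
    (by rw [← map_inv, ← map_mul, ← map_mul, ds_rel_x, map_pow])
    (by rw [← map_inv, ← map_mul, ← map_mul, ds_rel_y, map_pow])
  rw [← map_pow, ← map_pow, ← map_iterComm] at h
  exact iterComm_pow_ne_one a b ha hb d (hρ (h.trans (map_one ρ).symm))
end
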